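/- arXiv:2010.00849 — 6 statements merged into one kernel-verified Lean document; each statement's English description precedes it below -/
import Mathlib

section
/- Let 𝔤 be a finite-dimensional reductive complex Lie algebra, let g be an automorphism of 𝔤 of finite order, let 𝔤₀ := 𝔤^g be the fixed-point subalgebra, and let 𝓗₀ be a Cartan subalgebra of 𝔤₀. Then the centralizer C_𝔤(𝓗₀) is a Cartan subalgebra of 𝔤. -/
/-- A finite-dimensional Lie algebra is *reductive* if its (solvable) radical equals its
centre. -/
def LieAlgebra.IsReductive (R L : Type*) [CommRing R] [LieRing L] [LieAlgebra R L] : Prop :=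
  LieAlgebra.radical R L = LieAlgebra.center R L

variable {L : Type*} [LieRing L] [LieAlgebra ℂ L]

/-- The fixed-point subalgebra `L^g` of a Lie algebra automorphism `g`. -/
def LieEquiv.fixedSubalgebra (g : L ≃ₗ⁅ℂ⁆ L) : LieSubalgebra ℂ L where
  carrier := {x | g x = x}
  add_mem' := by
    intro a b ha hb
    simp only [Set.mem_setOf_eq] at ha hb ⊢
    show g.toLinearEquiv (a + b) = a + b
    rw [map_add]
    show g a + g b = a + b
    rw [ha, hb]
  zero_mem' := by
    show g.toLinearEquiv 0 = 0
    exact map_zero _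
  smul_mem' := by
    intro c x hx
    simp only [Set.mem_setOf_eq] at hx ⊢
    show g.toLinearEquiv (c • x) = c • x
    rw [map_smul]
    show c • g x = c • x
    rw [hx]
  lie_mem' := by
    intro x y hx hy
    simp only [Set.mem_setOf_eq] at hx hy ⊢
    rw [g.map_lie, hx, hy]

/-- The centralizer `C_L(s)` of a subset `s` of a Lie algebra `L`. -/
def lieSetCentralizer (s : Set L) : LieSubalgebra ℂ L where
  carrier := {x | ∀ y ∈ s, ⁅x, y⁆ = 0}
  add_mem' := by
    intro a b ha hb y hy
    rw [add_lie, ha y hy, hb y hy, add_zero]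
  zero_mem' := by
    intro y hy
    rw [zero_lie]
  smul_mem' := by
    intro c x hx y hy
    rw [smul_lie, hx y hy, smul_zero]
  lie_mem' := by
    intro x y hx hy z hz
    rw [lie_lie, hx z hz, hy z hz, lie_zero, lie_zero, sub_zero]

/-!
Put `𝔤₀ = 𝔤^σ`, let `H ⊆ 𝔤₀` be a Cartan subalgebra, and let `P` be its zero weight space in `𝔤`.
As `𝔤` is reductive, each `ad x` has its Jordan parts among the inner derivations, and an element is
central as soon as it is Killing-orthogonal to `𝔤`, or only to `P` if it lies in `P`. Since `P` is
graded by the eigenvalues of `σ`, with degree-one part `H`, this shows first that `[H, H]` is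
central and then, applied to nilpotent Jordan parts, that `H` acts semisimply. Hence `C_𝔤(H) = P`,
which is its own normalizer.

The same argument shows that every homogeneous `x ∈ P` is ad-semisimple, so that
`(ad x)^(k+1) y = 0` forces `[x, y] = 0`. Thus elements of degrees `a` and `b` commute if those of
degrees `a` and `a^k b` do. If `a` has infinite order, some `a^k b` is not an eigenvalue of `σ`; if
`a` and `b` are roots of unity, Euclid's algorithm on exponents leads to degree one, where `H`
centralizes `P`. So `P` is abelian.
-/

namespace ReductiveLie

open LieAlgebra Module

attribute [local instance] LieRing.ofAssociativeRing

section Semisimple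

variable {K V : Type*} [Field K] [AddCommGroup V] [Module K V] {f : End K V}

lemma isSemisimple_of_pow_eq_one [CharZero K] {n : ℕ} (hn : 0 < n) (hf : f ^ n = 1) :
    f.IsSemisimple := by
  have : NeZero (n : K) := ⟨Nat.cast_ne_zero.2 hn.ne'⟩
  refine End.isSemisimple_of_squarefree_aeval_eq_zero (p := Polynomial.X ^ n - 1) ?_ (by simp [hf])
  exact (Polynomial.X_pow_sub_one_separable_iff.2 this.ne).squarefree

lemma apply_eq_zero_of_pow_apply_eq_zero (hf : f.IsSemisimple) {k : ℕ} {v : V}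
    (hv : (f ^ k) v = 0) : f v = 0 := by
  have hmem : v ∈ f.maxGenEigenspace 0 :=
    (f.mem_maxGenEigenspace 0 v).2 ⟨k, by simpa using hv⟩
  rw [hf.isFinitelySemisimple.maxGenEigenspace_eq_eigenspace] at hmem
  simpa using hmem

lemma le_of_forall_inf_eigenspace_le [IsAlgClosed K] [FiniteDimensional K V]
    (hf : f.IsSemisimple) {W U : Submodule K V} (hW : ∀ v ∈ W, f v ∈ W)
    (h : ∀ c, W ⊓ f.eigenspace c ≤ U) : W ≤ U := by
  rw [Submodule.eq_iSup_inf_genEigenspace 1 hW hf.iSup_eigenspace_eq_top]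
  exact iSup_le h

end Semisimple

section Center

variable {R 𝔤 : Type*} [CommRing R] [LieRing 𝔤] [LieAlgebra R 𝔤]

lemma ad_eq_zero_iff_mem_center {x : 𝔤} : ad R 𝔤 x = 0 ↔ x ∈ center R 𝔤 := by
  rw [← LieHom.mem_ker, ad_ker_eq_self_module_ker, self_module_ker_eq_center]

lemma lie_mem_center_iff_commute_ad {x y : 𝔤} :
    ⁅x, y⁆ ∈ center R 𝔤 ↔ Commute (ad R 𝔤 x) (ad R 𝔤 y) := by
  rw [← ad_eq_zero_iff_mem_center, LieHom.map_lie, commute_iff_lie_eq]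

lemma killingForm_eq_zero_of_mem_center {z : 𝔤} (hz : z ∈ center R 𝔤) :
    killingForm R 𝔤 z = 0 := by
  ext y
  simp [killingForm_apply_apply, ad_eq_zero_iff_mem_center.2 hz]

end Center

section Reductive

variable {K 𝔤 : Type*} [Field K] [LieRing 𝔤] [LieAlgebra K 𝔤] [CharZero K] [FiniteDimensional K 𝔤]

lemma mem_center_of_killingForm_eq_zero (hred : IsReductive K 𝔤) {x : 𝔤}
    (hx : ∀ y, killingForm K 𝔤 x y = 0) : x ∈ center K 𝔤 := by
  rw [← hred]
  refine killingCompl_top_le_radical K 𝔤 ((LieIdeal.mem_killingCompl K 𝔤 ⊤).2 fun y _ ↦ ?_)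
  rw [LieModule.traceForm_comm, hx]

lemma mem_center_of_forall_lie_mem_center (hred : IsReductive K 𝔤) {x : 𝔤}
    (hx : ∀ y, ⁅x, y⁆ ∈ center K 𝔤) : x ∈ center K 𝔤 := by
  refine mem_center_of_killingForm_eq_zero hred fun y ↦ ?_
  have : ad K 𝔤 y ∘ₗ ad K 𝔤 x = 0 := LinearMap.ext fun z ↦ hx z y
  rw [LieModule.traceForm_comm, killingForm_apply_apply, this, map_zero]

lemma exists_killingForm_eq (hred : IsReductive K 𝔤) {f : Dual K 𝔤}
    (hf : ∀ z ∈ center K 𝔤, f z = 0) : ∃ x, killingForm K 𝔤 x = f := by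
  have hrange : LinearMap.range (killingForm K 𝔤) =
      (LinearMap.ker (killingForm K 𝔤)).dualAnnihilator := by
    rw [LinearMap.dualAnnihilator_ker_eq_range_flip, LieModule.traceForm_flip]
  rw [← LinearMap.mem_range, hrange, Submodule.mem_dualAnnihilator]
  exact fun z hz ↦ hf z <| mem_center_of_killingForm_eq_zero hred (LinearMap.congr_fun hz)

lemma derivation_apply_mem_center (hred : IsReductive K 𝔤) {D : LieDerivation K 𝔤 𝔤}
    (hD : ∀ y, LinearMap.trace K 𝔤 (D.toLinearMap ∘ₗ ad K 𝔤 y) = 0) (x : 𝔤) :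
    D x ∈ center K 𝔤 := by
  refine mem_center_of_killingForm_eq_zero hred fun y ↦ ?_
  have h : ad K 𝔤 (D x) = ⁅D.toLinearMap, ad K 𝔤 x⁆ := by
    ext z
    simp [LieRing.of_associative_ring_bracket]
  calc killingForm K 𝔤 (D x) y
    _ = LinearMap.trace K 𝔤 (⁅D.toLinearMap, ad K 𝔤 x⁆ * ad K 𝔤 y) := by
      rw [killingForm_apply_apply, h, Module.End.mul_eq_comp]
    _ = LinearMap.trace K 𝔤 (D.toLinearMap * ad K 𝔤 ⁅x, y⁆) := by
      rw [LinearMap.trace_lie_mul_eq, LieHom.map_lie]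
    _ = 0 := hD _

lemma derivation_eq_zero_of_apply_mem_center (hred : IsReductive K 𝔤) {D : LieDerivation K 𝔤 𝔤}
    (hD : ∀ x, D x ∈ center K 𝔤) (hDz : ∀ z ∈ center K 𝔤, D z = 0) : D = 0 := by
  have hlie (a b : 𝔤) : D ⁅a, b⁆ = 0 := by
    rw [D.apply_lie_eq_sub, hD b a, hD a b, sub_zero]
  -- `f ∘ D` vanishes on the centre and on all brackets, so it is `κ(x, ·)` with `x` central.
  have hdual (f : Dual K 𝔤) : f ∘ₗ D.toLinearMap = 0 := by
    obtain ⟨x, hx⟩ := exists_killingForm_eq hred (f := f ∘ₗ D.toLinearMap)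
      fun z hz ↦ (congrArg f (hDz z hz)).trans f.map_zero
    have hlie_x (a : 𝔤) : ⁅x, a⁆ ∈ center K 𝔤 := by
      refine mem_center_of_killingForm_eq_zero hred fun b ↦ ?_
      rw [LieModule.traceForm_apply_lie_apply, hx]
      exact (congrArg f (hlie a b)).trans f.map_zero
    rw [← hx, killingForm_eq_zero_of_mem_center (mem_center_of_forall_lie_mem_center hred hlie_x)]
  ext x
  exact (Module.forall_dual_apply_eq_zero_iff K _).1 fun f ↦ LinearMap.congr_fun (hdual f) x

lemma exists_ad_eq_derivation (hred : IsReductive K 𝔤) {D : LieDerivation K 𝔤 𝔤}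
    (hD : ∀ z ∈ center K 𝔤, D z = 0) : ∃ d, ad K 𝔤 d = D.toLinearMap := by
  let τ : Dual K 𝔤 :=
    LinearMap.trace K 𝔤 ∘ₗ LinearMap.mulLeft K D.toLinearMap ∘ₗ (ad K 𝔤 : 𝔤 →ₗ[K] End K 𝔤)
  obtain ⟨d, hd⟩ := exists_killingForm_eq hred (f := τ) fun z hz ↦ by
    simp [τ, ad_eq_zero_iff_mem_center.2 hz]
  suffices D - LieDerivation.ad K 𝔤 d = 0 from
    ⟨d, by rw [sub_eq_zero.1 this, LieDerivation.coe_ad_apply_eq_ad_apply]⟩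
  refine derivation_eq_zero_of_apply_mem_center hred ?_ ?_
  · refine derivation_apply_mem_center hred fun y ↦ ?_
    have hdy : LinearMap.trace K 𝔤 (ad K 𝔤 d ∘ₗ ad K 𝔤 y) =
        LinearMap.trace K 𝔤 (D.toLinearMap ∘ₗ ad K 𝔤 y) := LinearMap.congr_fun hd y
    have hsub : (D - LieDerivation.ad K 𝔤 d).toLinearMap = D.toLinearMap - ad K 𝔤 d := by
      ext
      simp
    rw [hsub, LinearMap.sub_comp, map_sub, hdy, sub_self]
  · intro z hz
    simp [hD z hz, hz d]

end Reductive

section Jordan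

variable {K 𝔤 : Type*} [Field K] [LieRing 𝔤] [LieAlgebra K 𝔤] {x y n : 𝔤}

lemma killingForm_eq_zero_of_isNilpotent_ad (hn : IsNilpotent (ad K 𝔤 n))
    (hny : ⁅n, y⁆ ∈ center K 𝔤) : killingForm K 𝔤 n y = 0 :=
  (LinearMap.isNilpotent_trace_of_isNilpotent
    ((lie_mem_center_iff_commute_ad.1 hny).isNilpotent_mul_right hn)).eq_zero

lemma lie_nilpotentPart_mem_center (hn : ad K 𝔤 n ∈ Algebra.adjoin K {ad K 𝔤 x})
    (hxy : ⁅x, y⁆ ∈ center K 𝔤) : ⁅n, y⁆ ∈ center K 𝔤 :=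
  lie_mem_center_iff_commute_ad.2 <|
    (Algebra.commute_of_mem_adjoin_singleton_of_commute hn
      (lie_mem_center_iff_commute_ad.1 hxy).symm).symm

variable [FiniteDimensional K 𝔤]

lemma ad_apply_nilpotentPart [PerfectField K] {σ : 𝔤 ≃ₗ⁅K⁆ 𝔤} {c : K} (hx : σ x = c • x)
    (hn : IsNilpotent (ad K 𝔤 n)) (hs : (ad K 𝔤 (x - n)).IsSemisimple)
    (hnx : ad K 𝔤 n ∈ Algebra.adjoin K {ad K 𝔤 x}) : ad K 𝔤 (σ n) = c • ad K 𝔤 n := by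
  have hcomm : Commute (ad K 𝔤 n) (ad K 𝔤 (x - n)) := by
    rw [map_sub]
    exact (Algebra.commute_of_mem_adjoin_self hnx).symm.sub_right rfl
  have hconj (y : 𝔤) : ad K 𝔤 (σ y) = σ.toLinearEquiv.conjRingEquiv (ad K 𝔤 y) :=
    (conj_ad_apply σ y).symm
  have hs_conj : (ad K 𝔤 (σ (x - n))).IsSemisimple :=
    (LinearEquiv.isSemisimple_iff (f := ad K 𝔤 (x - n)) (ad K 𝔤 (σ (x - n))) σ.toLinearEquiv
      (LinearMap.ext fun y ↦ σ.map_lie (x - n) y)).1 hs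
  refine (End.isNilpotent_isSemisimple_unique ?_ hs_conj (hn.smul c)
    (End.IsSemisimple_smul c hs) ?_ ((hcomm.smul_left c).smul_right c) ?_).1
  · rw [hconj]
    exact hn.map _
  · rw [hconj, hconj]
    exact hcomm.map _
  · rw [← map_add, ← map_add, add_sub_cancel, hx, map_smul, ← smul_add, ← map_add, add_sub_cancel]

variable [IsAlgClosed K]

lemma semisimplePart_ad_lie {S : End K 𝔤} (hS : S.IsSemisimple) (hxS : Commute (ad K 𝔤 x) S)
    (hnil : IsNilpotent (ad K 𝔤 x - S)) (y z : 𝔤) : S ⁅y, z⁆ = ⁅S y, z⁆ + ⁅y, S z⁆ := by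
  have hS_apply {a : K} {u : 𝔤} (hu : u ∈ (ad K 𝔤 x).maxGenEigenspace a) : S u = a • u :=
    End.apply_eq_of_mem_of_comm_of_isFinitelySemisimple_of_isNil hu hxS
      hS.isFinitelySemisimple hnil
  have htop (u : 𝔤) : u ∈ ⨆ a, (ad K 𝔤 x).maxGenEigenspace a := by
    simp [End.iSup_maxGenEigenspace_eq_top]
  induction htop y using Submodule.iSup_induction' with
  | zero => simp
  | add u v _ _ hu hv => simp only [add_lie, map_add, hu, hv]; abel
  | mem a u hu =>
    induction htop z using Submodule.iSup_induction' with
    | zero => simp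
    | add v w _ _ hv hw => simp only [lie_add, map_add, hv, hw]; abel
    | mem b v hv =>
      rw [hS_apply hu, hS_apply hv, smul_lie, lie_smul, ← add_smul]
      exact hS_apply (LieModule.lie_mem_maxGenEigenspace_toEnd hu hv)

variable [CharZero K]

lemma exists_isNilpotent_ad_isSemisimple_ad_sub (hred : IsReductive K 𝔤) (x : 𝔤) :
    ∃ n, IsNilpotent (ad K 𝔤 n) ∧ (ad K 𝔤 (x - n)).IsSemisimple ∧
      ad K 𝔤 n ∈ Algebra.adjoin K {ad K 𝔤 x} := by
  obtain ⟨N, hNx, S, hSx, hN, hS, hsum⟩ := (ad K 𝔤 x).exists_isNilpotent_isSemisimple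
  have hNS : N = ad K 𝔤 x - S := eq_sub_of_add_eq hsum.symm
  have hxS : Commute (ad K 𝔤 x) S := Algebra.commute_of_mem_adjoin_self hSx
  let D : LieDerivation K 𝔤 𝔤 := ⟨S, fun y z ↦ by
    rw [semisimplePart_ad_lie hS hxS (hNS ▸ hN), ← lie_skew z, add_comm, sub_eq_add_neg, neg_neg]⟩
  have hDz (z : 𝔤) (hz : z ∈ center K 𝔤) : D z = 0 := by
    have hz0 : z ∈ (ad K 𝔤 x).eigenspace 0 := by simpa using hz x
    exact (End.apply_eq_of_mem_of_comm_of_isFinitelySemisimple_of_isNil hz0 hxS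
      hS.isFinitelySemisimple (hNS ▸ hN)).trans (zero_smul K z)
  obtain ⟨s, hs⟩ : ∃ s, ad K 𝔤 s = S := exists_ad_eq_derivation hred hDz
  refine ⟨x - s, ?_, ?_, ?_⟩
  · rwa [map_sub, hs, ← hNS]
  · rwa [sub_sub_cancel, hs]
  · rwa [map_sub, hs, ← hNS]

end Jordan

section CommuteInDegrees

variable {R 𝔤 : Type*} [CommRing R] [LieRing 𝔤] [LieAlgebra R 𝔤] {σ : 𝔤 ≃ₗ⁅R⁆ 𝔤}

/-- The homogeneous elements of degrees `a` and `b` of the subalgebra `C` commute, where an element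
is homogeneous of degree `c` if it is an eigenvector of `σ` for `c`, or zero. -/
def CommuteInDegrees (σ : 𝔤 ≃ₗ⁅R⁆ 𝔤) (C : LieSubalgebra R 𝔤) (a b : R) : Prop :=
  ∀ x ∈ C, σ x = a • x → ∀ y ∈ C, σ y = b • y → ⁅x, y⁆ = 0

variable {C : LieSubalgebra R 𝔤} {a b : R}

lemma CommuteInDegrees.symm (h : CommuteInDegrees σ C a b) : CommuteInDegrees σ C b a :=
  fun y hy hby x hx hax ↦ by rw [← lie_skew, h x hx hax y hy hby, neg_zero]

lemma commuteInDegrees_zero_left : CommuteInDegrees σ C 0 b := by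
  intro x _ hx y _ _
  rw [zero_smul, EmbeddingLike.map_eq_zero_iff] at hx
  rw [hx, zero_lie]

lemma ad_pow_apply_mem {x y : 𝔤} (hx : x ∈ C) (hy : y ∈ C) (k : ℕ) : (ad R 𝔤 x ^ k) y ∈ C := by
  induction k with
  | zero => exact hy
  | succ k ih =>
    rw [pow_succ']
    exact C.lie_mem hx ih

lemma apply_ad_pow_apply {x y : 𝔤} (hx : σ x = a • x) (hy : σ y = b • y) (k : ℕ) :
    σ ((ad R 𝔤 x ^ k) y) = (a ^ k * b) • (ad R 𝔤 x ^ k) y := by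
  induction k with
  | zero => simpa using hy
  | succ k ih =>
    rw [pow_succ', Module.End.mul_apply, ad_apply, LieEquiv.map_lie, ih, hx, smul_lie, lie_smul,
      smul_smul, pow_succ', mul_assoc]

end CommuteInDegrees

section HomogeneousAbelian

variable {K 𝔤 : Type*} [Field K] [LieRing 𝔤] [LieAlgebra K 𝔤] {σ : 𝔤 ≃ₗ⁅K⁆ 𝔤}
  {C : LieSubalgebra K 𝔤} {a b : K}

lemma CommuteInDegrees.of_pow_mul
    (hss : ∀ x ∈ C, σ x = a • x → (ad K 𝔤 x).IsSemisimple) (k : ℕ)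
    (h : CommuteInDegrees σ C a (a ^ k * b)) : CommuteInDegrees σ C a b := by
  intro x hx hax y hy hby
  refine apply_eq_zero_of_pow_apply_eq_zero (hss x hx hax) (k := k + 1) ?_
  rw [pow_succ', Module.End.mul_apply]
  exact h x hx hax _ (ad_pow_apply_mem hx hy k) (apply_ad_pow_apply hax hby k)

lemma commuteInDegrees_of_not_isOfFinOrder [FiniteDimensional K 𝔤]
    (hss : ∀ x ∈ C, σ x = a • x → (ad K 𝔤 x).IsSemisimple) (ha : a ≠ 0) (hb : b ≠ 0)
    (hfin : ¬ IsOfFinOrder a) : CommuteInDegrees σ C a b := by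
  have hinj : Function.Injective fun k : ℕ ↦ a ^ k * b :=
    (mul_left_injective₀ hb).comp <| Units.val_injective.comp <|
      (injective_pow_iff_not_isOfFinOrder (x := Units.mk0 a ha)).2 <| by
        rwa [← Units.isOfFinOrder_val]
  obtain ⟨k, hk⟩ : ∃ k : ℕ, ¬ End.HasEigenvalue (σ : 𝔤 →ₗ[K] 𝔤) (a ^ k * b) := by
    by_contra! hall
    exact Set.infinite_range_of_injective hinj <|
      (End.finite_hasEigenvalue _).subset (Set.range_subset_iff.2 hall)
  refine .of_pow_mul hss k fun x _ _ y _ hy ↦ ?_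
  have : y = 0 := by
    by_contra hy0
    exact hk (End.hasEigenvalue_of_hasEigenvector ⟨End.mem_eigenspace_iff.2 hy, hy0⟩)
  rw [this, lie_zero]

-- Euclid's algorithm on the exponents: as `ζ` is a root of unity, some power of `ad x`, with `x` of
-- degree `ζ ^ m`, lowers the degree `ζ ^ n` to `ζ ^ (n % m)`.
lemma commuteInDegrees_pow_pow
    (hss : ∀ c : K, ∀ x ∈ C, σ x = c • x → (ad K 𝔤 x).IsSemisimple)
    (hfix : ∀ b, CommuteInDegrees σ C 1 b) {ζ : K} {N : ℕ} (hN : 0 < N) (hζ : ζ ^ N = 1)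
    (m n : ℕ) : CommuteInDegrees σ C (ζ ^ m) (ζ ^ n) := by
  induction m, n using Nat.gcd.induction with
  | H0 n => simpa using hfix (ζ ^ n)
  | H1 m n _ ih =>
    have hpow : (ζ ^ m) ^ ((N - 1) * (n / m)) * ζ ^ n = ζ ^ (n % m) := by
      have hexp : m * ((N - 1) * (n / m)) + n = N * (m * (n / m)) + n % m := by
        obtain ⟨M, rfl⟩ := Nat.exists_eq_succ_of_ne_zero hN.ne'
        nth_rewrite 2 [← Nat.div_add_mod n m]
        simp only [Nat.succ_eq_add_one, Nat.add_sub_cancel]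
        ring
      rw [← pow_mul, ← pow_add, hexp, pow_add, pow_mul, hζ, one_pow, one_mul]
    exact .of_pow_mul (hss _) ((N - 1) * (n / m)) (hpow ▸ ih.symm)

lemma exists_pow_eq_and_pow_eq [IsAlgClosed K] [CharZero K] (ha : IsOfFinOrder a)
    (hb : IsOfFinOrder b) :
    ∃ (ζ : K) (N m n : ℕ), 0 < N ∧ ζ ^ N = 1 ∧ ζ ^ m = a ∧ ζ ^ n = b := by
  have : NeZero (orderOf a * orderOf b) :=
    ⟨mul_ne_zero ha.orderOf_pos.ne' hb.orderOf_pos.ne'⟩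
  obtain ⟨ζ, hζ⟩ := HasEnoughRootsOfUnity.exists_primitiveRoot K (orderOf a * orderOf b)
  obtain ⟨m, -, hm⟩ := hζ.eq_pow_of_pow_eq_one (ξ := a) <| by
    rw [pow_mul, pow_orderOf_eq_one, one_pow]
  obtain ⟨n, -, hn⟩ := hζ.eq_pow_of_pow_eq_one (ξ := b) <| by
    rw [mul_comm, pow_mul, pow_orderOf_eq_one, one_pow]
  exact ⟨ζ, _, m, n, Nat.pos_of_ne_zero (NeZero.ne _), hζ.pow_eq_one, hm, hn⟩

lemma commuteInDegrees [IsAlgClosed K] [CharZero K] [FiniteDimensional K 𝔤]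
    (hss : ∀ c : K, ∀ x ∈ C, σ x = c • x → (ad K 𝔤 x).IsSemisimple)
    (hfix : ∀ b, CommuteInDegrees σ C 1 b) (a b : K) : CommuteInDegrees σ C a b := by
  obtain rfl | ha := eq_or_ne a 0
  · exact commuteInDegrees_zero_left
  obtain rfl | hb := eq_or_ne b 0
  · exact commuteInDegrees_zero_left.symm
  by_cases hfa : IsOfFinOrder a
  · by_cases hfb : IsOfFinOrder b
    · obtain ⟨ζ, N, m, n, hN, hζ, rfl, rfl⟩ := exists_pow_eq_and_pow_eq hfa hfb
      exact commuteInDegrees_pow_pow hss hfix hN hζ m n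
    · exact (commuteInDegrees_of_not_isOfFinOrder (hss b) hb ha hfb).symm
  · exact commuteInDegrees_of_not_isOfFinOrder (hss a) ha hb hfa

lemma lie_eq_zero_of_commuteInDegrees [IsAlgClosed K] [FiniteDimensional K 𝔤]
    (hσ : End.IsSemisimple (σ : 𝔤 →ₗ[K] 𝔤)) (hC : ∀ x ∈ C, σ x ∈ C)
    (h : ∀ a b, CommuteInDegrees σ C a b) {x y : 𝔤} (hx : x ∈ C)
    (hy : y ∈ C) : ⁅x, y⁆ = 0 := by
  have hker {a : K} {x : 𝔤} (hx : x ∈ C) (hax : σ x = a • x) :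
      C.toSubmodule ≤ LinearMap.ker (ad K 𝔤 x) :=
    le_of_forall_inf_eigenspace_le hσ hC fun b y hy ↦
      h a b x hx hax y hy.1 (End.mem_eigenspace_iff.1 hy.2)
  have hker' : C.toSubmodule ≤ LinearMap.ker (ad K 𝔤 y) :=
    le_of_forall_inf_eigenspace_le hσ hC fun a z hz ↦ by
      have hzy : ⁅z, y⁆ = 0 := hker hz.1 (End.mem_eigenspace_iff.1 hz.2) hy
      rw [LinearMap.mem_ker, ad_apply, ← lie_skew, hzy, neg_zero]
  rw [← lie_skew, show ⁅y, x⁆ = 0 from hker' hx, neg_zero]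

end HomogeneousAbelian

section ZeroWeightSpace

variable {R L' M : Type*} [CommRing R] [LieRing L'] [LieAlgebra R L'] [LieRing.IsNilpotent L']
  [AddCommGroup M] [Module R M] [LieRingModule L' M] [LieModule R L' M]

lemma mem_genWeightSpace_zero_of_forall_lie_mem {y : M}
    (hy : ∀ h : L', ⁅h, y⁆ ∈ LieModule.genWeightSpace M (0 : L' → R)) :
    y ∈ LieModule.genWeightSpace M (0 : L' → R) := by
  rwa [← LieModule.genWeightSpace_zero_normalizer_eq_self, LieSubmodule.mem_normalizer]

lemma genWeightSpace_zero_induction [IsNoetherian R M] {p : M → Prop} (zero : p 0)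
    (lie : ∀ y, (∀ h : L', p ⁅h, y⁆) → p y) {y : M}
    (hy : y ∈ LieModule.genWeightSpace M (0 : L' → R)) : p y := by
  have hucs (k : ℕ) : ∀ z ∈ (⊥ : LieSubmodule R L' M).ucs k, p z := by
    induction k with
    | zero => simpa using zero
    | succ k ih =>
      intro z hz
      rw [LieSubmodule.ucs_succ, LieSubmodule.mem_normalizer] at hz
      exact lie z fun h ↦ ih _ (hz h)
  obtain ⟨k, hk⟩ := (LieSubmodule.isNilpotent_iff_exists_self_le_ucs
    (LieModule.genWeightSpace M (0 : L' → R))).1 inferInstance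
  exact hucs k y (hk hy)

lemma traceForm_apply_lie_eq_zero {K V : Type*} [Field K] [CharZero K] [IsAlgClosed K]
    [LieAlgebra K L'] [AddCommGroup V] [Module K V] [LieRingModule L' V] [LieModule K L' V]
    [FiniteDimensional K V] (x y z : L') : LieModule.traceForm K L' V x ⁅y, z⁆ = 0 := by
  simp [LieModule.traceForm_eq_sum_finrank_nsmul]

end ZeroWeightSpace

section FixedPoints

variable {K 𝔤 : Type*} [Field K] [LieRing 𝔤] [LieAlgebra K 𝔤] {σ : 𝔤 ≃ₗ⁅K⁆ 𝔤} {x y : 𝔤} {c d : K}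

lemma killingForm_eq_zero_of_mul_ne_one (hx : ad K 𝔤 (σ x) = c • ad K 𝔤 x) (hy : σ y = d • y)
    (hcd : c * d ≠ 1) : killingForm K 𝔤 x y = 0 := by
  have h : c * d * killingForm K 𝔤 x y = killingForm K 𝔤 x y :=
    calc c * d * killingForm K 𝔤 x y
      _ = killingForm K 𝔤 (σ x) (σ y) := by
        simp [killingForm_apply_apply, hx, hy, LinearMap.smul_comp, mul_assoc, mul_left_comm]
      _ = killingForm K 𝔤 x y := killingForm_of_equiv_apply σ x y
  by_contra h0
  exact hcd (mul_right_cancel₀ h0 (by rw [h, one_mul]))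

variable [FiniteDimensional K 𝔤] {H : LieSubalgebra K 𝔤} [LieRing.IsNilpotent H]

lemma apply_mem_rootSpace_zero (hH : ∀ h ∈ H, σ h = h)
    (hx : x ∈ rootSpace H (0 : H → K)) : σ x ∈ rootSpace H (0 : H → K) := by
  refine genWeightSpace_zero_induction (p := fun x ↦ σ x ∈ rootSpace H (0 : H → K)) ?_ ?_ hx
  · simp
  · intro y hy
    refine mem_genWeightSpace_zero_of_forall_lie_mem fun h ↦ ?_
    have hσ : σ ⁅(h : 𝔤), y⁆ = ⁅(h : 𝔤), σ y⁆ := by rw [σ.map_lie, hH h h.2]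
    exact hσ ▸ hy h

lemma mem_of_mem_rootSpace_zero (hH : ∀ h ∈ H, σ h = h)
    (hnorm : ∀ x, σ x = x → (∀ h ∈ H, ⁅h, x⁆ ∈ H) → x ∈ H)
    (hx : x ∈ rootSpace H (0 : H → K)) (hσx : σ x = x) : x ∈ H := by
  refine genWeightSpace_zero_induction (p := fun x ↦ σ x = x → x ∈ H)
    (fun _ ↦ H.zero_mem) ?_ hx hσx
  intro y hy hσy
  refine hnorm y hσy fun h hh ↦ hy ⟨h, hh⟩ ?_
  change σ ⁅h, y⁆ = ⁅h, y⁆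
  rw [σ.map_lie, hH h hh, hσy]

variable [CharZero K]

lemma mem_center_of_killingForm_rootSpace_zero (hred : IsReductive K 𝔤)
    (hx : x ∈ rootSpace H (0 : H → K))
    (h : ∀ y ∈ rootSpace H (0 : H → K), killingForm K 𝔤 x y = 0) : x ∈ center K 𝔤 := by
  refine mem_center_of_killingForm_eq_zero hred fun y ↦ ?_
  have hy : y ∈ rootSpace H (0 : H → K) ⊔ LieModule.posFittingComp K H 𝔤 :=
    (LieModule.isCompl_genWeightSpace_zero_posFittingComp K H 𝔤).sup_eq_top ▸ LieSubmodule.mem_top y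
  obtain ⟨y₀, hy₀, y₁, hy₁, rfl⟩ := (LieSubmodule.mem_sup _ _ _).1 hy
  rw [map_add, h y₀ hy₀, zero_add]
  refine LieModule.eq_zero_of_mem_genWeightSpace_mem_posFitting K H 𝔤 (fun h m n ↦ ?_) hx hy₁
  exact LieModule.traceForm_apply_lie_apply' K 𝔤 𝔤 (h : 𝔤) m n

variable [IsAlgClosed K]

lemma mem_center_of_killingForm_eq_zero_of_mul_eq_one (hred : IsReductive K 𝔤)
    (hσ : End.IsSemisimple (σ : 𝔤 →ₗ[K] 𝔤)) (hH : ∀ h ∈ H, σ h = h)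
    (hx : x ∈ rootSpace H (0 : H → K)) (hσx : ad K 𝔤 (σ x) = c • ad K 𝔤 x)
    (h : ∀ y ∈ rootSpace H (0 : H → K), ∀ d : K, σ y = d • y → c * d = 1 →
      killingForm K 𝔤 x y = 0) : x ∈ center K 𝔤 := by
  have hker : (rootSpace H (0 : H → K)).toSubmodule ≤ LinearMap.ker (killingForm K 𝔤 x) := by
    refine le_of_forall_inf_eigenspace_le hσ (fun y hy ↦ apply_mem_rootSpace_zero hH hy) ?_
    rintro d y ⟨hy, hdy⟩
    have hdy' : σ y = d • y := End.mem_eigenspace_iff.1 hdy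
    by_cases hcd : c * d = 1
    · exact h y hy d hdy' hcd
    · exact killingForm_eq_zero_of_mul_ne_one hσx hdy' hcd
  exact mem_center_of_killingForm_rootSpace_zero hred hx hker

-- The nilpotent Jordan part of `x` is homogeneous of the same degree as `x`, modulo the centre, and
-- it is Killing-orthogonal to the zero weight space, in which it lies. So it is central.
lemma isSemisimple_ad_of_lie_mem_center (hred : IsReductive K 𝔤)
    (hσ : End.IsSemisimple (σ : 𝔤 →ₗ[K] 𝔤)) (hH : ∀ h ∈ H, σ h = h) (hσx : σ x = c • x)
    (hxH : ∀ h ∈ H, ⁅x, h⁆ ∈ center K 𝔤)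
    (hxP : ∀ y ∈ rootSpace H (0 : H → K), ∀ d : K, σ y = d • y → c * d = 1 →
      ⁅x, y⁆ ∈ center K 𝔤) : (ad K 𝔤 x).IsSemisimple := by
  obtain ⟨n, hn, hs, hnx⟩ := exists_isNilpotent_ad_isSemisimple_ad_sub hred x
  have hnP : n ∈ rootSpace H (0 : H → K) := by
    refine mem_genWeightSpace_zero_of_forall_lie_mem fun h ↦
      mem_genWeightSpace_zero_of_forall_lie_mem fun h' ↦ ?_
    have hhn : ⁅(h : 𝔤), n⁆ ∈ center K 𝔤 := by
      rw [← lie_skew]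
      exact neg_mem (lie_nilpotentPart_mem_center hnx (hxH h h.2))
    have hzero : ⁅h', ⁅h, n⁆⁆ = 0 := hhn h'
    exact hzero ▸ zero_mem _
  have hnZ : n ∈ center K 𝔤 :=
    mem_center_of_killingForm_eq_zero_of_mul_eq_one hred hσ hH hnP
      (ad_apply_nilpotentPart hσx hn hs hnx) fun y hy d hdy hcd ↦
        killingForm_eq_zero_of_isNilpotent_ad hn <|
          lie_nilpotentPart_mem_center hnx (hxP y hy d hdy hcd)
  simpa [ad_eq_zero_iff_mem_center.2 hnZ] using hs

lemma mem_center_of_mem_of_killingForm_eq_zero (hred : IsReductive K 𝔤)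
    (hσ : End.IsSemisimple (σ : 𝔤 →ₗ[K] 𝔤)) (hH : ∀ h ∈ H, σ h = h)
    (hfix : ∀ x ∈ rootSpace H (0 : H → K), σ x = x → x ∈ H) (hx : x ∈ H)
    (h : ∀ y ∈ H, killingForm K 𝔤 x y = 0) : x ∈ center K 𝔤 := by
  refine mem_center_of_killingForm_eq_zero_of_mul_eq_one (c := 1) hred hσ hH
    (toLieSubmodule_le_rootSpace_zero K 𝔤 H hx) (by rw [hH x hx, one_smul]) fun y hy d hdy hd ↦ ?_
  rw [one_mul] at hd
  exact h y (hfix y hy (by rw [hdy, hd, one_smul]))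

lemma lie_mem_center_of_mem_of_mem (hred : IsReductive K 𝔤)
    (hσ : End.IsSemisimple (σ : 𝔤 →ₗ[K] 𝔤)) (hH : ∀ h ∈ H, σ h = h)
    (hfix : ∀ x ∈ rootSpace H (0 : H → K), σ x = x → x ∈ H) (hx : x ∈ H) (hy : y ∈ H) :
    ⁅x, y⁆ ∈ center K 𝔤 := by
  refine mem_center_of_mem_of_killingForm_eq_zero hred hσ hH hfix (H.lie_mem hx hy) fun z hz ↦ ?_
  rw [LieModule.traceForm_comm]
  exact traceForm_apply_lie_eq_zero (V := 𝔤) (⟨z, hz⟩ : H) ⟨x, hx⟩ ⟨y, hy⟩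

lemma isSemisimple_ad_of_mem (hred : IsReductive K 𝔤)
    (hσ : End.IsSemisimple (σ : 𝔤 →ₗ[K] 𝔤)) (hH : ∀ h ∈ H, σ h = h)
    (hfix : ∀ x ∈ rootSpace H (0 : H → K), σ x = x → x ∈ H) (hx : x ∈ H) :
    (ad K 𝔤 x).IsSemisimple := by
  refine isSemisimple_ad_of_lie_mem_center (c := 1) hred hσ hH (by rw [hH x hx, one_smul])
    (fun h hh ↦ lie_mem_center_of_mem_of_mem hred hσ hH hfix hx hh) fun y hy d hdy hd ↦ ?_
  rw [one_mul] at hd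
  exact lie_mem_center_of_mem_of_mem hred hσ hH hfix hx (hfix y hy (by rw [hdy, hd, one_smul]))

end FixedPoints

section Subalgebras

variable {R 𝔤 : Type*} [CommRing R] [LieRing 𝔤] [LieAlgebra R 𝔤]

variable (R) in
/-- The centralizer of a subset of a Lie algebra, as a Lie subalgebra. -/
def centralizer (s : Set 𝔤) : LieSubalgebra R 𝔤 where
  carrier := {x | ∀ y ∈ s, ⁅x, y⁆ = 0}
  add_mem' ha hb y hy := by rw [add_lie, ha y hy, hb y hy, add_zero]
  zero_mem' y _ := zero_lie y
  smul_mem' c x hx y hy := by rw [smul_lie, hx y hy, smul_zero]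
  lie_mem' hx hy z hz := by rw [lie_lie, hx z hz, hy z hz, lie_zero, lie_zero, sub_zero]

/-- The subalgebra of fixed points of an automorphism of a Lie algebra. -/
def fixedPoints (σ : 𝔤 ≃ₗ⁅R⁆ 𝔤) : LieSubalgebra R 𝔤 where
  carrier := {x | σ x = x}
  add_mem' ha hb := (map_add σ _ _).trans (congrArg₂ (· + ·) ha hb)
  zero_mem' := map_zero σ
  smul_mem' c x hx := (map_smul σ c x).trans (congrArg (c • ·) hx)
  lie_mem' hx hy := (σ.map_lie _ _).trans (congrArg₂ (⁅·, ·⁆) hx hy)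

end Subalgebras

section Centralizer

variable {K 𝔤 : Type*} [Field K] [LieRing 𝔤] [LieAlgebra K 𝔤] {H : LieSubalgebra K 𝔤}

lemma centralizer_eq_zeroRootSubalgebra [FiniteDimensional K 𝔤] [LieRing.IsNilpotent H]
    (hss : ∀ h ∈ H, (ad K 𝔤 h).IsSemisimple) :
    centralizer K (H : Set 𝔤) = zeroRootSubalgebra K 𝔤 H := by
  refine le_antisymm (fun x hx ↦ ?_) fun x hx ↦ ?_
  · refine mem_genWeightSpace_zero_of_forall_lie_mem fun h ↦ ?_
    have hzero : ⁅h, x⁆ = 0 := (lie_skew (h : 𝔤) x).symm.trans (by rw [hx h h.2, neg_zero])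
    exact hzero ▸ zero_mem _
  · suffices ∀ h ∈ H, ⁅h, x⁆ = 0 from fun h hh ↦ by rw [← lie_skew, this h hh, neg_zero]
    refine genWeightSpace_zero_induction (L' := H) (R := K) (p := fun x ↦ ∀ h ∈ H, ⁅h, x⁆ = 0)
      (fun h _ ↦ lie_zero h) (fun y hy h hh ↦ ?_) hx
    exact apply_eq_zero_of_pow_apply_eq_zero (hss h hh) (k := 2) (hy ⟨h, hh⟩ h hh)

variable [CharZero K] [IsAlgClosed K] [FiniteDimensional K 𝔤] [LieRing.IsNilpotent H]
  {σ : 𝔤 ≃ₗ⁅K⁆ 𝔤} {x y : 𝔤} {c d : K}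

lemma lie_mem_center_of_mul_eq_one (hred : IsReductive K 𝔤)
    (hσ : End.IsSemisimple (σ : 𝔤 →ₗ[K] 𝔤)) (hH : ∀ h ∈ H, σ h = h)
    (hfix : ∀ x ∈ rootSpace H (0 : H → K), σ x = x → x ∈ H)
    (hC : centralizer K (H : Set 𝔤) = zeroRootSubalgebra K 𝔤 H)
    (hx : x ∈ centralizer K (H : Set 𝔤)) (hy : y ∈ centralizer K (H : Set 𝔤))
    (hσx : σ x = c • x) (hσy : σ y = d • y) (hcd : c * d = 1) : ⁅x, y⁆ ∈ center K 𝔤 := by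
  have hxy : ⁅x, y⁆ ∈ H := by
    refine hfix _ (hC.le (LieSubalgebra.lie_mem _ hx hy)) ?_
    rw [σ.map_lie, hσx, hσy, smul_lie, lie_smul, smul_smul, hcd, one_smul]
  refine mem_center_of_mem_of_killingForm_eq_zero hred hσ hH hfix hxy fun h hh ↦ ?_
  rw [LieModule.traceForm_apply_lie_apply, hy h hh, map_zero]

lemma isSemisimple_ad_of_mem_centralizer (hred : IsReductive K 𝔤)
    (hσ : End.IsSemisimple (σ : 𝔤 →ₗ[K] 𝔤)) (hH : ∀ h ∈ H, σ h = h)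
    (hfix : ∀ x ∈ rootSpace H (0 : H → K), σ x = x → x ∈ H)
    (hC : centralizer K (H : Set 𝔤) = zeroRootSubalgebra K 𝔤 H)
    (hx : x ∈ centralizer K (H : Set 𝔤)) (hσx : σ x = c • x) : (ad K 𝔤 x).IsSemisimple := by
  refine isSemisimple_ad_of_lie_mem_center hred hσ hH hσx (fun h hh ↦ ?_) fun y hy d hσy hcd ↦
    lie_mem_center_of_mul_eq_one hred hσ hH hfix hC hx (hC.ge hy) hσx hσy hcd
  rw [hx h hh]
  exact zero_mem _

lemma isCartanSubalgebra_centralizer (hred : IsReductive K 𝔤)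
    (hσ : End.IsSemisimple (σ : 𝔤 →ₗ[K] 𝔤)) (hH : ∀ h ∈ H, σ h = h)
    (hnorm : ∀ x, σ x = x → (∀ h ∈ H, ⁅h, x⁆ ∈ H) → x ∈ H) :
    (centralizer K (H : Set 𝔤)).IsCartanSubalgebra := by
  have hfix (x : 𝔤) (hx : x ∈ rootSpace H (0 : H → K)) (hσx : σ x = x) : x ∈ H :=
    mem_of_mem_rootSpace_zero hH hnorm hx hσx
  have hC : centralizer K (H : Set 𝔤) = zeroRootSubalgebra K 𝔤 H :=
    centralizer_eq_zeroRootSubalgebra fun h hh ↦ isSemisimple_ad_of_mem hred hσ hH hfix hh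
  have hcomm (a b : K) : CommuteInDegrees σ (centralizer K (H : Set 𝔤)) a b := by
    refine commuteInDegrees (fun c x hx hσx ↦
      isSemisimple_ad_of_mem_centralizer hred hσ hH hfix hC hx hσx) (fun b x hx hσx y hy _ ↦ ?_) a b
    rw [← lie_skew, hy x (hfix x (hC.le hx) (by rw [hσx, one_smul])), neg_zero]
  have habelian : IsLieAbelian (centralizer K (H : Set 𝔤)) :=
    ⟨fun x y ↦ Subtype.ext <| lie_eq_zero_of_commuteInDegrees hσ
      (fun z hz ↦ hC.ge (apply_mem_rootSpace_zero hH (hC.le hz))) hcomm x.2 y.2⟩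
  refine ⟨inferInstance, ?_⟩
  rw [hC]
  exact zeroRootSubalgebra_normalizer_eq_self K 𝔤 H

end Centralizer

end ReductiveLie

open LieAlgebra Module ReductiveLie in
theorem centralizer_of_cartan_of_fixedSubalgebra_isCartanSubalgebra_general
    {K 𝔤 : Type*} [Field K] [CharZero K] [IsAlgClosed K] [LieRing 𝔤] [LieAlgebra K 𝔤]
    [FiniteDimensional K 𝔤] (hred : IsReductive K 𝔤) (σ : 𝔤 ≃ₗ⁅K⁆ 𝔤)
    (hσ : End.IsSemisimple (σ : 𝔤 →ₗ[K] 𝔤)) (H₀ : LieSubalgebra K (fixedPoints σ))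
    (hH₀ : H₀.IsCartanSubalgebra) :
    (centralizer K (H₀.map (fixedPoints σ).incl : Set 𝔤)).IsCartanSubalgebra := by
  have hnil : LieRing.IsNilpotent (H₀.map (fixedPoints σ).incl) :=
    (LieEquiv.nilpotent_iff_equiv_nilpotent
      (H₀.equivMapOfInjective (f := (fixedPoints σ).incl) Subtype.val_injective)).1 hH₀.nilpotent
  refine isCartanSubalgebra_centralizer hred hσ ?_ fun x hσx hx ↦ ?_
  · rintro _ ⟨h, -, rfl⟩
    exact h.2
  · refine ⟨⟨x, hσx⟩, ?_, rfl⟩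
    rw [← hH₀.self_normalizing]
    refine (LieSubalgebra.mem_normalizer_iff' ..).2 fun h hh ↦ ?_
    obtain ⟨h', hmem, hlie⟩ := hx h ⟨h, hh, rfl⟩
    have heq : h' = ⁅h, ⟨x, hσx⟩⁆ := Subtype.ext hlie
    exact heq ▸ hmem

/-- Let `L` be a finite-dimensional reductive complex Lie algebra, `g` an
automorphism of `L` of finite order `n`, `L^g` its fixed-point subalgebra, and `H₀` a Cartan
subalgebra of `L^g`.  Then the centralizer `C_L(H₀)` is a Cartan subalgebra of `L`. -/
theorem centralizer_of_cartan_of_fixedSubalgebra_isCartanSubalgebra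
    [FiniteDimensional ℂ L] (hred : LieAlgebra.IsReductive ℂ L)
    (g : L ≃ₗ⁅ℂ⁆ L) (n : ℕ) (hn : 0 < n) (hg : ∀ x, (⇑g)^[n] x = x)
    (H₀ : LieSubalgebra ℂ g.fixedSubalgebra) (hH₀ : H₀.IsCartanSubalgebra) :
    (lieSetCentralizer ((H₀.map g.fixedSubalgebra.incl : LieSubalgebra ℂ L) :
      Set L)).IsCartanSubalgebra :=
  centralizer_of_cartan_of_fixedSubalgebra_isCartanSubalgebra_general hred g
    (ReductiveLie.isSemisimple_of_pow_eq_one hn (LinearMap.ext fun x ↦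
      (Module.End.pow_apply _ n x).trans (hg x))) H₀ hH₀
end

section
/- Let 𝔤 be a finite-dimensional reductive complex Lie algebra, let g be an automorphism of 𝔤 of finite order, let 𝓗 be a Cartan subalgebra of 𝔤, and let 𝓗₀ be any Cartan subalgebra of the fixed-point subalgebra 𝔤^g. Then dim(𝓗^g) ≤ dim(𝓗₀), and equality dim(𝓗^g) = dim(𝓗₀) holds if and only if 𝓗^g is itself a Cartan subalgebra of 𝔤^g. -/
variable {L : Type*} [LieRing L] [LieAlgebra ℂ L]

/-!
Every element of a Cartan subalgebra `H` of a reductive Lie algebra acts semisimply in the adjoint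
representation: modulo the centre this is the semisimple theory, and it lifts because a central
extension of a semisimple Lie algebra splits. Hence `H ∩ M` is toral in any subalgebra `M`; a
Cartan subalgebra of the centralizer in `M` of `H ∩ M` contains `H ∩ M` and is a Cartan subalgebra
of `M`.

It remains to see that all Cartan subalgebras have the same dimension. A Cartan subalgebra is the
generalized `0`-eigenspace of `ad x` for one of its elements `x`, so together with the range
of `ad x` it spans the Lie algebra. By the implicit function theorem every `y` near `x` is therefore
of the form `exp (ad u) (x + h)` with `h ∈ H`. Regular elements being dense, some `x + h ∈ H` is
regular, which makes `dim H` the rank.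
-/

open LieAlgebra LieSubalgebra Module

section Cartan

variable {R 𝔤 𝔤' : Type*} [CommRing R] [LieRing 𝔤] [LieAlgebra R 𝔤] [LieRing 𝔤'] [LieAlgebra R 𝔤']

lemma isNilpotent_map (f : 𝔤 →ₗ⁅R⁆ 𝔤') (H : LieSubalgebra R 𝔤) [LieRing.IsNilpotent H] :
    LieRing.IsNilpotent (H.map f) := by
  let p : H →ₗ⁅R⁆ H.map f :=
    { f.toLinearMap.submoduleMap H.toSubmodule with map_lie' := Subtype.ext (f.map_lie _ _) }
  have hp : Function.Surjective p := f.toLinearMap.submoduleMap_surjective H.toSubmodule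
  exact hp.lieAlgebra_isNilpotent

variable (H : LieSubalgebra R 𝔤) [H.IsCartanSubalgebra]

lemma mem_of_forall_lie_mem_of_isCartanSubalgebra {x : 𝔤} (h : ∀ y ∈ H, ⁅x, y⁆ ∈ H) : x ∈ H := by
  have hx : x ∈ H.normalizer := (mem_normalizer_iff H x).mpr h
  rwa [IsCartanSubalgebra.self_normalizing] at hx

lemma isCartanSubalgebra_map_of_surjective {f : 𝔤 →ₗ⁅R⁆ 𝔤'} (hf : Function.Surjective f)
    (hker : ∀ z, f z = 0 → z ∈ H) : (H.map f).IsCartanSubalgebra where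
  nilpotent := isNilpotent_map f H
  self_normalizing := by
    refine le_antisymm (fun y hy ↦ ?_) (le_normalizer _)
    obtain ⟨x, rfl⟩ := hf y
    refine ⟨x, mem_of_forall_lie_mem_of_isCartanSubalgebra H fun h hh ↦ ?_, rfl⟩
    obtain ⟨h', hh', hfh'⟩ := (mem_normalizer_iff _ _).mp hy (f h) ⟨h, hh, rfl⟩
    have hdiff : f (⁅x, h⁆ - h') = 0 := by
      rw [map_sub, f.map_lie, sub_eq_zero]
      exact hfh'.symm
    simpa using H.add_mem (hker _ hdiff) hh'

lemma isCartanSubalgebra_map_incl {M : LieSubalgebra R 𝔤} (A : LieSubalgebra R M)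
    [A.IsCartanSubalgebra] (hA : (A.map M.incl).normalizer ≤ M) :
    (A.map M.incl).IsCartanSubalgebra where
  nilpotent := isNilpotent_map M.incl A
  self_normalizing := by
    refine le_antisymm (fun x hx ↦ ?_) (le_normalizer _)
    refine ⟨⟨x, hA hx⟩, mem_of_forall_lie_mem_of_isCartanSubalgebra A fun a ha ↦ ?_, rfl⟩
    obtain ⟨b, hb, hbx⟩ := (mem_normalizer_iff _ _).mp hx a ⟨a, ha, rfl⟩
    rwa [← show b = ⁅(⟨x, hA hx⟩ : M), a⁆ from Subtype.ext hbx]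

lemma mem_of_mem_center_of_isCartanSubalgebra {z : 𝔤} (hz : z ∈ center R 𝔤) : z ∈ H :=
  mem_of_forall_lie_mem_of_isCartanSubalgebra H fun y _ ↦ by
    rw [← lie_skew, hz y, neg_zero]
    exact H.zero_mem

end Cartan

section Toral

variable {K 𝔤 : Type*} [Field K] [LieRing 𝔤] [LieAlgebra K 𝔤]

/-- A subalgebra is *toral* if each of its elements is semisimple as an endomorphism of the whole
Lie algebra, under the adjoint action. -/
def IsToral (T : LieSubalgebra K 𝔤) : Prop :=
  ∀ t ∈ T, (ad K 𝔤 t).IsSemisimple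

lemma lie_eq_zero_of_mem_engel {x y : 𝔤} (hx : (ad K 𝔤 x).IsSemisimple)
    (hy : y ∈ engel K x) : ⁅x, y⁆ = 0 := by
  have h : y ∈ (ad K 𝔤 x).maxGenEigenspace 0 := by
    simpa [Module.End.mem_maxGenEigenspace] using (mem_engel_iff K x y).mp hy
  rw [hx.isFinitelySemisimple.maxGenEigenspace_eq_eigenspace] at h
  simpa using h

lemma isSemisimple_ad_of_isSemisimple_ad_coe {M : LieSubalgebra K 𝔤} {x : M}
    (hx : (ad K 𝔤 x).IsSemisimple) : (ad K M x).IsSemisimple := by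
  have hM : M.toSubmodule ∈ (ad K 𝔤 x).invtSubmodule := fun _ hy ↦ M.lie_mem x.2 hy
  exact hx.restrict hM

namespace IsToral

variable {T : LieSubalgebra K 𝔤}

lemma comap_incl (hT : IsToral T) (M : LieSubalgebra K 𝔤) : IsToral (T.comap M.incl) :=
  fun t ht ↦ isSemisimple_ad_of_isSemisimple_ad_coe (hT t ht)

variable [FiniteDimensional K 𝔤]

-- An eigenvector `y` of `ad x` in `T` satisfies `(ad y)² x = 0`, hence `(ad y) x = 0`.
lemma isLieAbelian [IsAlgClosed K] (hT : IsToral T) : IsLieAbelian T := by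
  have hss (t : T) : (ad K T t).IsSemisimple := isSemisimple_ad_of_isSemisimple_ad_coe (hT t t.2)
  suffices ∀ x : T, ad K T x = 0 from ⟨fun x y ↦ LinearMap.congr_fun (this x) y⟩
  intro x
  refine (hss x).eq_zero_iff_forall_eigenvalue.mpr fun a ha ↦ ?_
  obtain ⟨y, hy, hy0⟩ := ha.exists_hasEigenvector
  have hxy : ⁅x, y⁆ = a • y := Module.End.mem_eigenspace_iff.mp hy
  have hyx : ⁅y, x⁆ = 0 := by
    refine lie_eq_zero_of_mem_engel (hss y) ((mem_engel_iff K y x).mpr ⟨2, ?_⟩)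
    simp [pow_two, ← lie_skew y x, hxy]
  rw [← lie_skew, hyx, neg_zero] at hxy
  exact (smul_eq_zero_iff_left hy0).mp hxy.symm

lemma exists_isCartanSubalgebra_ge [Infinite K] [LieRing.IsNilpotent T] (hT : IsToral T) :
    ∃ H : LieSubalgebra K 𝔤, H.IsCartanSubalgebra ∧ T ≤ H := by
  let C := zeroRootSubalgebra K 𝔤 T
  have hTC : T ≤ C := le_zeroRootSubalgebra K 𝔤 T
  have hcentral {t c : 𝔤} (ht : t ∈ T) (hc : c ∈ C) : ⁅t, c⁆ = 0 :=
    lie_eq_zero_of_mem_engel (hT t ht) <|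
      (mem_engel_iff K t c).mpr <| (mem_zeroRootSubalgebra K 𝔤 T c).mp hc ⟨t, ht⟩
  obtain ⟨x, hA⟩ := exists_isCartanSubalgebra_engel K C
  set A := engel K x
  have hTA : T ≤ A.map C.incl := by
    refine fun t ht ↦ ⟨⟨t, hTC ht⟩, mem_of_mem_center_of_isCartanSubalgebra A fun c ↦ ?_, rfl⟩
    rw [← lie_skew, neg_eq_zero]
    exact Subtype.ext (hcentral ht c.2)
  refine ⟨A.map C.incl, isCartanSubalgebra_map_incl A fun m hm ↦ ?_, hTA⟩
  refine (mem_zeroRootSubalgebra K 𝔤 T m).mpr fun t ↦ ⟨2, ?_⟩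
  obtain ⟨a, -, ha⟩ := (mem_normalizer_iff' _ _).mp hm t (hTA t.2)
  have htm : ⁅(t : 𝔤), m⁆ ∈ C := ha ▸ a.2
  simpa [pow_two] using hcentral t.2 htm

end IsToral
end Toral

section Semiconj

open Polynomial

variable {K V W : Type*} [Field K] [AddCommGroup V] [Module K V] [AddCommGroup W] [Module K W]

lemma map_aeval_apply_of_semiconj {f : V →ₗ[K] W} {a : End K V} {b : End K W}
    (hab : ∀ v, f (a v) = b (f v)) (p : K[X]) (v : V) :
    f (aeval a p v) = aeval b p (f v) := by
  induction p using Polynomial.induction_on' with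
  | add p q hp hq => simp [hp, hq]
  | monomial n c =>
    have hpow : f ((a ^ n) v) = (b ^ n) (f v) := by
      simpa only [Module.End.pow_apply] using Function.Semiconj.iterate_right hab n v
    simp [aeval_monomial, hpow]

lemma isSemisimple_of_semiconj [FiniteDimensional K W] {f : V →ₗ[K] W} {a : End K V} {b : End K W}
    (hab : ∀ v, f (a v) = b (f v)) (hf : ∀ v, f (a v) = 0 → a v = 0) (hb : b.IsSemisimple) :
    a.IsSemisimple := by
  have isSemisimple_of_X_mul {r : K[X]} (hsq : Squarefree (X * r))
      (hr : aeval b (X * r) = 0) : a.IsSemisimple := by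
    refine Module.End.isSemisimple_of_squarefree_aeval_eq_zero hsq (LinearMap.ext fun v ↦ ?_)
    have hfv := map_aeval_apply_of_semiconj hab (X * r) v
    rw [hr] at hfv
    simp only [map_mul, aeval_X, Module.End.mul_apply, LinearMap.zero_apply] at hfv ⊢
    exact hf _ hfv
  have hsq := hb.minpoly_squarefree
  by_cases hX : X ∣ minpoly K b
  · obtain ⟨r, hr⟩ := hX
    exact isSemisimple_of_X_mul (hr ▸ hsq) (hr ▸ minpoly.aeval K b)
  · refine isSemisimple_of_X_mul (r := minpoly K b) ?_ (by simp)
    exact squarefree_mul_iff.mpr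
      ⟨irreducible_X.isRelPrime_iff_not_dvd.mpr hX, irreducible_X.squarefree, hsq⟩

end Semiconj

section Radical

variable {R 𝔤 𝔮 : Type*} [CommRing R] [LieRing 𝔤] [LieAlgebra R 𝔤] [LieRing 𝔮] [LieAlgebra R 𝔮]

lemma hasTrivialRadical_of_surjective_of_ker_eq_radical [IsNoetherian R 𝔤] {f : 𝔤 →ₗ⁅R⁆ 𝔮}
    (hf : Function.Surjective f) (hker : f.ker = radical R 𝔤) : HasTrivialRadical R 𝔮 := by
  rw [hasTrivialRadical_iff_no_abelian_ideals]
  intro I hI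
  let J := I.comap f
  have hJ : derivedSeriesOfIdeal R 𝔤 1 J ≤ radical R 𝔤 := by
    rw [← hker, derivedSeriesOfIdeal_succ, derivedSeriesOfIdeal_zero, LieSubmodule.lie_le_iff]
    intro x hx y hy
    rw [LieHom.mem_ker, f.map_lie]
    exact congrArg Subtype.val (hI.trivial ⟨f x, hx⟩ ⟨f y, hy⟩)
  obtain ⟨k, hk⟩ := IsSolvable.solvable R (radical R 𝔤)
  rw [LieIdeal.derivedSeries_eq_bot_iff] at hk
  have hJsolv : IsSolvable J := by
    refine IsSolvable.mk (R := R) (k := k + 1) ((LieIdeal.derivedSeries_eq_bot_iff J _).mpr ?_)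
    rw [derivedSeriesOfIdeal_add, ← le_bot_iff, ← hk]
    exact derivedSeriesOfIdeal_mono hJ k
  rw [LieIdeal.solvable_iff_le_radical, ← hker] at hJsolv
  rw [_root_.eq_bot_iff]
  intro y hy
  obtain ⟨x, rfl⟩ := hf y
  exact hJsolv hy

end Radical

section Reductive

variable {K 𝔤 S : Type*} [Field K] [LieRing 𝔤] [LieAlgebra K 𝔤] [LieRing S] [LieAlgebra K S]

-- The Killing form turns the cocycle `ω` into a derivation of `S`, which is inner.
lemma exists_dual_apply_lie_eq_of_cocycle [FiniteDimensional K S] [IsKilling K S]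
    (ω : S →ₗ[K] Dual K S) (hω : ∀ x y z, ω x ⁅y, z⁆ = ω ⁅x, y⁆ z + ω y ⁅x, z⁆) :
    ∃ ψ : Dual K S, ∀ x y, ω x y = ψ ⁅x, y⁆ := by
  let κ := killingForm K S
  have hκ : κ.Nondegenerate := IsKilling.killingForm_nondegenerate K S
  have lie_invariant : ∀ x y z, κ ⁅x, y⁆ z = κ x ⁅y, z⁆ := LieModule.traceForm_apply_lie_apply K S S
  let D₀ : End K S := (LinearMap.BilinForm.toDual κ hκ).symm.toLinearMap ∘ₗ ω
  have hD₀ (x y : S) : κ (D₀ x) y = ω x y :=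
    LinearMap.BilinForm.apply_toDual_symm_apply (hB := hκ) _ _
  let D : LieDerivation K S S :=
    { toLinearMap := D₀
      leibniz' := fun a b ↦ by
        refine (LinearMap.BilinForm.toDual κ hκ).injective (LinearMap.ext fun w ↦ ?_)
        have hright (c d : S) : κ ⁅c, D₀ d⁆ w = -ω d ⁅c, w⁆ := by
          rw [← lie_skew, map_neg, LinearMap.neg_apply, lie_invariant, hD₀]
        simp only [LinearMap.BilinForm.toDual_def, map_sub, LinearMap.sub_apply, hright, hD₀]
        linear_combination -hω a b w }
  obtain ⟨d, hd⟩ := LieDerivation.IsKilling.exists_eq_ad D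
  refine ⟨κ d, fun x y ↦ ?_⟩
  calc ω x y = κ (D x) y := (hD₀ x y).symm
    _ = κ ⁅d, x⁆ y := by rw [← hd, LieDerivation.ad_apply_apply]
    _ = κ d ⁅x, y⁆ := lie_invariant d x y

-- For `φ : Dual K 𝔤`, the form `φ ⁅x, y⁆` descends to a cocycle on `S`, so it depends on `f ⁅x, y⁆`
-- only.
lemma lie_eq_zero_of_map_lie_eq_zero [FiniteDimensional K S] [IsKilling K S] {f : 𝔤 →ₗ⁅K⁆ S}
    (hf : Function.Surjective f) (hker : f.ker ≤ center K 𝔤) {x y : 𝔤} (hxy : f ⁅x, y⁆ = 0) :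
    ⁅x, y⁆ = 0 := by
  obtain ⟨s, hs⟩ := f.toLinearMap.exists_rightInverse_of_surjective
    (LinearMap.range_eq_top.mpr hf)
  have lie_section_right (a b : 𝔤) : ⁅a, s (f b)⁆ = ⁅a, b⁆ := by
    have hb : s (f b) - b ∈ center K 𝔤 :=
      hker <| by simpa [sub_eq_zero] using LinearMap.congr_fun hs (f b)
    simpa [sub_eq_zero] using hb a
  have lie_section (a b : 𝔤) : ⁅s (f a), s (f b)⁆ = ⁅a, b⁆ := by
    rw [lie_section_right, ← lie_skew, lie_section_right, lie_skew]
  refine (forall_dual_apply_eq_zero_iff K _).mp fun φ ↦ ?_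
  let ω : S →ₗ[K] Dual K S := ((ad K 𝔤 : 𝔤 →ₗ[K] End K 𝔤).compl₁₂ s s).compr₂ φ
  have hω (a b : 𝔤) : ω (f a) (f b) = φ ⁅a, b⁆ := congrArg φ (lie_section a b)
  obtain ⟨ψ, hψ⟩ := exists_dual_apply_lie_eq_of_cocycle ω fun a b c ↦ by
    obtain ⟨a, rfl⟩ := hf a
    obtain ⟨b, rfl⟩ := hf b
    obtain ⟨c, rfl⟩ := hf c
    simp only [← f.map_lie, hω]
    rw [leibniz_lie, map_add]
  rw [← hω, hψ, ← f.map_lie, hxy, map_zero]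

lemma isToral_of_isCartanSubalgebra [CharZero K] [IsAlgClosed K] [FiniteDimensional K 𝔤]
    [HasCentralRadical K 𝔤] (H : LieSubalgebra K 𝔤) [H.IsCartanSubalgebra] : IsToral H := by
  let f : 𝔤 →ₗ⁅K⁆ 𝔤 ⧸ center K 𝔤 :=
    { (center K 𝔤).toSubmodule.mkQ with map_lie' := rfl }
  have hf : Function.Surjective f := Submodule.mkQ_surjective _
  have hker : f.ker = center K 𝔤 :=
    LieSubmodule.ext _ _ fun z ↦ Submodule.Quotient.mk_eq_zero _
  have := hasTrivialRadical_of_surjective_of_ker_eq_radical hf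
    (hker.trans (HasCentralRadical.radical_eq_center (R := K) (L := 𝔤)).symm)
  have := isCartanSubalgebra_map_of_surjective H hf fun z hz ↦
    mem_of_mem_center_of_isCartanSubalgebra H (hker.le hz)
  intro t ht
  refine isSemisimple_of_semiconj (f := f.toLinearMap) (b := ad K (𝔤 ⧸ center K 𝔤) (f t))
    (fun x ↦ f.map_lie t x) (fun x ↦ lie_eq_zero_of_map_lie_eq_zero hf hker.le) ?_
  exact IsKilling.isSemisimple_ad_of_mem_isCartanSubalgebra (H := H.map f) ⟨t, ht, rfl⟩

end Reductive

section Engel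

variable {R 𝔤 : Type*} [CommRing R] [LieRing 𝔤] [LieAlgebra R 𝔤]

lemma le_engel_of_mem_of_isNilpotent {H : LieSubalgebra R 𝔤} [LieRing.IsNilpotent H] {x : 𝔤}
    (hx : x ∈ H) : H ≤ engel R x := fun y hy ↦
  (mem_engel_iff R x y).mpr <|
    (mem_zeroRootSubalgebra R 𝔤 H y).mp (le_zeroRootSubalgebra R 𝔤 H hy) ⟨x, hx⟩

lemma engel_sup_range_ad_eq_top [IsArtinian R 𝔤] (x : 𝔤) :
    (engel R x).toSubmodule ⊔ (ad R 𝔤 x).range = ⊤ := by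
  obtain ⟨k, hk⟩ := Filter.eventually_atTop.mp (ad R 𝔤 x).eventually_codisjoint_ker_pow_range_pow
  refine top_unique ((hk (k + 1) k.le_succ).eq_top.ge.trans (sup_le_sup (fun y hy ↦ ?_) ?_))
  · exact (mem_engel_iff R x y).mpr ⟨k + 1, hy⟩
  · rw [pow_succ']
    exact LinearMap.range_comp_le_range _ _

end Engel

section CartanEngel

variable {K 𝔤 : Type*} [Field K] [LieRing 𝔤] [LieAlgebra K 𝔤] [FiniteDimensional K 𝔤]

lemma exists_mem_forall_engel_le [Infinite K] (H : LieSubalgebra K 𝔤) [LieRing.IsNilpotent H] :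
    ∃ x ∈ H, ∀ y ∈ H, engel K x ≤ engel K y := by
  obtain ⟨x, hx, hmin⟩ := exists_minimalFor_of_wellFoundedLT (· ∈ H)
    (fun x ↦ finrank K (engel K x)) ⟨0, H.zero_mem⟩
  have hbot : IsBot (⟨engel K x, x, hx, rfl⟩ : {engel K z | z ∈ H}) := by
    refine engel_isBot_of_isMin ?_ H _ (le_engel_of_mem_of_isNilpotent hx) ?_
    · exact Cardinal.natCast_le_aleph0.trans (Cardinal.infinite_iff.mp ‹_›)
    · rintro ⟨_, y, hy, rfl⟩ hyx
      have hfin := hmin hy (Submodule.finrank_mono hyx)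
      exact (toSubmodule_injective (Submodule.eq_of_le_of_finrank_le hyx hfin)).ge
  exact ⟨x, hx, fun y hy ↦ @hbot ⟨engel K y, y, hy, rfl⟩⟩

lemma exists_mem_eq_engel_of_isCartanSubalgebra [Infinite K] (H : LieSubalgebra K 𝔤)
    [H.IsCartanSubalgebra] : ∃ x ∈ H, H = engel K x := by
  obtain ⟨x, hx, hmin⟩ := exists_mem_forall_engel_le H
  refine ⟨x, hx, le_antisymm (le_engel_of_mem_of_isNilpotent hx) fun y hy ↦ ?_⟩
  rw [← zeroRootSubalgebra_eq_of_is_cartan K 𝔤 H, mem_zeroRootSubalgebra]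
  exact fun z ↦ (mem_engel_iff K (z : 𝔤) y).mp (hmin z z.2 hy)

end CartanEngel

section Exp

open NormedSpace Filter Topology

variable {𝕜 E : Type*} [RCLike 𝕜] [NormedAddCommGroup E] [NormedSpace 𝕜 E]
  [CompleteSpace E]

lemma exp_mul_exp_neg {A : Type*} [NormedRing A] [NormedAlgebra ℚ A] [CompleteSpace A] (a : A) :
    exp a * exp (-a) = 1 := by
  rw [← exp_add_of_commute (Commute.refl a).neg_right, add_neg_cancel, exp_zero]

-- Here and below `B u` stands for `ad u`. The bracket is carried by a bilinear map because a normed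
-- group structure and a Lie ring structure on the same type bring two unrelated additions.
lemma hasDerivAt_exp_conj {B : E →L[𝕜] E →L[𝕜] E} {D : E →L[𝕜] E}
    (hB : ∀ y, B (D y) = D * B y - B y * D) (y : E) (t : 𝕜) :
    HasDerivAt (fun t : 𝕜 ↦ exp (t • -D) * B (exp (t • D) y) * exp (t • D)) 0 t := by
  have hexp := hasDerivAt_exp_smul_const' (𝕂 := 𝕜) D t
  have hBexp : HasDerivAt (fun t : 𝕜 ↦ B (exp (t • D) y)) (B (D (exp (t • D) y))) t :=
    B.hasFDerivAt.comp_hasDerivAt t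
      ((ContinuousLinearMap.apply 𝕜 E y).hasFDerivAt.comp_hasDerivAt t hexp)
  refine (((hasDerivAt_exp_smul_const (𝕂 := 𝕜) (-D) t).mul hBexp).mul hexp).congr_deriv ?_
  rw [hB, Pi.mul_apply]
  noncomm_ring

lemma map_exp_apply_eq_conj {B : E →L[𝕜] E →L[𝕜] E} {D : E →L[𝕜] E}
    (hB : ∀ y, B (D y) = D * B y - B y * D) (y : E) :
    B (exp D y) = exp D * B y * exp (-D) := by
  let _ : NormedAlgebra ℚ (E →L[𝕜] E) := NormedAlgebra.restrictScalars ℚ 𝕜 _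
  have hconj : exp (-D) * B (exp D y) * exp D = B y := by
    simpa using is_const_of_deriv_eq_zero (fun t ↦ (hasDerivAt_exp_conj hB y t).differentiableAt)
      (fun t ↦ (hasDerivAt_exp_conj hB y t).deriv) 1 0
  calc B (exp D y) = (exp D * exp (-D)) * B (exp D y) * (exp D * exp (-D)) := by
        simp [exp_mul_exp_neg]
    _ = exp D * B y * exp (-D) := by
        rw [← hconj]
        noncomm_ring

lemma hasStrictFDerivAt_exp_apply_add (B : E →L[𝕜] E →L[𝕜] E) (S : Submodule 𝕜 E) (x : E) :
    HasStrictFDerivAt (fun p : S × E ↦ exp (B p.2) (x + p.1))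
      (S.subtypeL ∘L .fst 𝕜 S E + B.flip x ∘L .snd 𝕜 S E) 0 := by
  have hexp : HasStrictFDerivAt (fun p : S × E ↦ exp (B p.2)) (B ∘L .snd 𝕜 S E) 0 := by
    have h := hasStrictFDerivAt_exp_zero (𝕂 := 𝕜) (𝔸 := E →L[𝕜] E)
    rw [← map_zero (B ∘L .snd 𝕜 S E)] at h
    exact h.comp 0 (B ∘L .snd 𝕜 S E).hasStrictFDerivAt
  refine (hexp.clm_apply
    ((S.subtypeL ∘L .fst 𝕜 S E).hasStrictFDerivAt.const_add x)).congr_fderiv ?_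
  ext p <;> simp

lemma map_nhds_exp_apply_add {B : E →L[𝕜] E →L[𝕜] E} {S : Submodule 𝕜 E} [CompleteSpace S]
    {x : E} (hS : S ⊔ (B.flip x : E →ₗ[𝕜] E).range = ⊤) :
    map (fun p : S × E ↦ exp (B p.2) (x + p.1)) (𝓝 0) = 𝓝 x := by
  have hsurj : (S.subtypeL ∘L .fst 𝕜 S E + B.flip x ∘L .snd 𝕜 S E).range = ⊤ := by
    rw [_root_.eq_top_iff, ← hS, sup_le_iff]
    refine ⟨fun h hh ↦ ⟨(⟨h, hh⟩, 0), by simp⟩, ?_⟩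
    rintro _ ⟨u, rfl⟩
    exact ⟨(0, u), by simp⟩
  simpa using (hasStrictFDerivAt_exp_apply_add B S x).map_nhds_eq_of_surj hsurj

lemma eventually_exists_conj_eq {B : E →L[𝕜] E →L[𝕜] E}
    (hB : ∀ u y, B (B u y) = B u * B y - B y * B u) {S : Submodule 𝕜 E}
    [CompleteSpace S] {x : E} (hS : S ⊔ (B.flip x : E →ₗ[𝕜] E).range = ⊤) :
    ∀ᶠ y in 𝓝 x, ∃ h ∈ S, ∃ e : E ≃ₗ[𝕜] E,
      (B y : E →ₗ[𝕜] E) = e.conj (B (x + h) : E →ₗ[𝕜] E) := by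
  let _ : NormedAlgebra ℚ (E →L[𝕜] E) := NormedAlgebra.restrictScalars ℚ 𝕜 _
  rw [← map_nhds_exp_apply_add hS, eventually_map]
  refine Eventually.of_forall fun ⟨h, u⟩ ↦ ⟨h, h.2, ?_⟩
  let e : E ≃L[𝕜] E := ContinuousLinearEquiv.unitsEquiv 𝕜 E
    ⟨exp (B u), exp (-B u), exp_mul_exp_neg _, by simpa using exp_mul_exp_neg (-B u)⟩
  refine ⟨e.toLinearEquiv, ?_⟩
  rw [map_exp_apply_eq_conj (hB u)]
  rfl

end Exp

section Density

variable {𝕜 E : Type*} [RCLike 𝕜] [NormedAddCommGroup E] [NormedSpace 𝕜 E]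

lemma dense_setOf_eval_ne_zero {ι : Type*} [FiniteDimensional 𝕜 E]
    (f : E →ₗ[𝕜] ι → 𝕜) {p : MvPolynomial ι 𝕜} {r : E} (hr : p.eval (f r) ≠ 0) :
    Dense {y | p.eval (f y) ≠ 0} := by
  let _ : NormedSpace ℝ E := NormedSpace.restrictScalars ℝ 𝕜 E
  refine fun x ↦ mem_closure_iff_frequently.mpr fun h ↦ hr ?_
  have heq : (fun y ↦ p.eval (f y)) = 0 :=
    (AnalyticOnNhd.eval_linearMap f p).eq_of_eventuallyEq analyticOnNhd_const (z₀ := x)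
      (h.mono fun _ ↦ not_not.mp)
  exact congrFun heq r

end Density

section Rank

variable {𝕜 𝔤 : Type*} [RCLike 𝕜] [LieRing 𝔤] [LieAlgebra 𝕜 𝔤] [FiniteDimensional 𝕜 𝔤]

lemma exists_mem_isRegular_add {S : Submodule 𝕜 𝔤} {x : 𝔤} (hS : S ⊔ (ad 𝕜 𝔤 x).range = ⊤) :
    ∃ h ∈ S, IsRegular 𝕜 (x + h) := by
  let b := finBasis 𝕜 𝔤
  let _ : NormedAddCommGroup 𝔤 := .induced 𝔤 _ b.equivFun.toLinearMap b.equivFun.injective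
  let _ : NormedSpace 𝕜 𝔤 := .induced 𝕜 𝔤 _ b.equivFun.toLinearMap
  have : CompleteSpace 𝔤 := FiniteDimensional.complete 𝕜 𝔤
  have : CompleteSpace S := FiniteDimensional.complete 𝕜 S
  let B : 𝔤 →L[𝕜] 𝔤 →L[𝕜] 𝔤 := LinearMap.toContinuousLinearMap <|
    LinearMap.toContinuousLinearMap.toLinearMap ∘ₗ (ad 𝕜 𝔤 : 𝔤 →ₗ[𝕜] End 𝕜 𝔤)
  have hB_lie (u y : 𝔤) : B (B u y) = B u * B y - B y * B u :=
    ContinuousLinearMap.ext fun z ↦ lie_lie u y z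
  have hB_range : (B.flip x : 𝔤 →ₗ[𝕜] 𝔤).range = (ad 𝕜 𝔤 x).range := by
    rw [← LinearMap.range_neg]
    exact congrArg _ (LinearMap.ext fun u ↦ lie_skew x u)
  obtain ⟨r, hr⟩ := exists_isRegular 𝕜 𝔤
  rw [isRegular_iff_coeff_polyCharpoly_rank_ne_zero 𝕜 b] at hr
  have hdense := dense_setOf_eval_ne_zero b.equivFun.toLinearMap hr
  obtain ⟨y, hy, h, hh, e, he⟩ := (mem_closure_iff_frequently.mp (hdense x)).and_eventually
    (eventually_exists_conj_eq hB_lie (hB_range ▸ hS)) |>.exists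
  replace hy : IsRegular 𝕜 y := (isRegular_iff_coeff_polyCharpoly_rank_ne_zero 𝕜 b y).mpr hy
  have had : ad 𝕜 𝔤 y = e.conj (ad 𝕜 𝔤 (x + h)) := he
  rw [isRegular_def, had, LinearEquiv.charpoly_conj, ← isRegular_def] at hy
  exact ⟨h, hh, hy⟩

lemma finrank_eq_rank_of_isCartanSubalgebra (H : LieSubalgebra 𝕜 𝔤) [H.IsCartanSubalgebra] :
    finrank 𝕜 H = rank 𝕜 𝔤 := by
  obtain ⟨x, hx, rfl⟩ := exists_mem_eq_engel_of_isCartanSubalgebra H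
  refine le_antisymm ?_ (rank_le_finrank_engel 𝕜 x)
  obtain ⟨h, hh, hreg⟩ := exists_mem_isRegular_add (engel_sup_range_ad_eq_top (R := 𝕜) x)
  rw [← (isRegular_iff_finrank_engel_eq_rank 𝕜 (x + h)).mp hreg]
  exact Submodule.finrank_mono (le_engel_of_mem_of_isNilpotent (add_mem hx hh))

lemma finrank_le_rank_and_eq_iff_of_le_isCartanSubalgebra
    {T H₁ : LieSubalgebra 𝕜 𝔤} [H₁.IsCartanSubalgebra] (hT : T ≤ H₁) :
    finrank 𝕜 T ≤ rank 𝕜 𝔤 ∧ (finrank 𝕜 T = rank 𝕜 𝔤 ↔ T.IsCartanSubalgebra) := by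
  rw [← finrank_eq_rank_of_isCartanSubalgebra H₁]
  refine ⟨Submodule.finrank_mono hT, fun h ↦ ?_, fun _ ↦ ?_⟩
  · rwa [toSubmodule_injective (Submodule.eq_of_le_of_finrank_eq hT h)]
  · rw [finrank_eq_rank_of_isCartanSubalgebra H₁, finrank_eq_rank_of_isCartanSubalgebra T]

end Rank

theorem finrank_fixed_cartan_le_and_eq_iff_general {𝔤 : Type*} [LieRing 𝔤] [LieAlgebra ℂ 𝔤]
    [FiniteDimensional ℂ 𝔤] (hred : LieAlgebra.IsReductive ℂ 𝔤) (M : LieSubalgebra ℂ 𝔤)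
    (H : LieSubalgebra ℂ 𝔤) (hH : H.IsCartanSubalgebra)
    (H₀ : LieSubalgebra ℂ M) (hH₀ : H₀.IsCartanSubalgebra) :
    finrank ℂ (H.comap M.incl) ≤ finrank ℂ H₀ ∧
      (finrank ℂ (H.comap M.incl) = finrank ℂ H₀ ↔ (H.comap M.incl).IsCartanSubalgebra) := by
  have : HasCentralRadical ℂ 𝔤 := ⟨hred⟩
  have hT : IsToral (H.comap M.incl) := (isToral_of_isCartanSubalgebra H).comap_incl M
  have := hT.isLieAbelian
  obtain ⟨H₁, hH₁, hTH₁⟩ := hT.exists_isCartanSubalgebra_ge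
  rw [finrank_eq_rank_of_isCartanSubalgebra H₀]
  exact finrank_le_rank_and_eq_iff_of_le_isCartanSubalgebra hTH₁

/-- Let `L` be a finite-dimensional reductive complex Lie algebra, `g` an
automorphism of `L` of finite order `n`, `H` a Cartan subalgebra of `L` and `H₀` any Cartan
subalgebra of the fixed-point subalgebra `L^g`.  Then `dim (H^g) ≤ dim H₀`, with equality if
and only if `H^g = H ∩ L^g` is a Cartan subalgebra of `L^g`. -/
theorem finrank_fixed_cartan_le_and_eq_iff
    [FiniteDimensional ℂ L] (hred : LieAlgebra.IsReductive ℂ L)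
    (g : L ≃ₗ⁅ℂ⁆ L) (n : ℕ) (hn : 0 < n) (hg : ∀ x, (⇑g)^[n] x = x)
    (H : LieSubalgebra ℂ L) (hH : H.IsCartanSubalgebra)
    (H₀ : LieSubalgebra ℂ g.fixedSubalgebra) (hH₀ : H₀.IsCartanSubalgebra) :
    Module.finrank ℂ (LieSubalgebra.comap g.fixedSubalgebra.incl H) ≤ Module.finrank ℂ H₀ ∧
      (Module.finrank ℂ (LieSubalgebra.comap g.fixedSubalgebra.incl H) = Module.finrank ℂ H₀ ↔
        (LieSubalgebra.comap g.fixedSubalgebra.incl H).IsCartanSubalgebra) :=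
  finrank_fixed_cartan_le_and_eq_iff_general hred g.fixedSubalgebra H hH H₀ hH₀
end

section
/- Let 𝔤 be a finite-dimensional reductive complex Lie algebra and let g be an automorphism of 𝔤 of finite order. Then there exists a Cartan subalgebra 𝓗 of 𝔤 such that 𝓗^g := 𝓗 ∩ 𝔤^g is a Cartan subalgebra of the fixed-point subalgebra 𝔤^g. -/
variable {L : Type*} [LieRing L] [LieAlgebra ℂ L]

/-!
Choose `x` in the fixed-point subalgebra `F` of `g` with Engel subalgebra `C` of least dimension.
Then `C ≤ engel y` for all `y ∈ F ∩ C`, so the fixed points of `g` on `C` are ad-nilpotent on `C`,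
which forces `C` to be solvable. Indeed, passing to `C / rad C`, the ad-nilpotent fixed points are
orthogonal to all fixed points, hence to everything, for the Killing form, and so vanish; but an
automorphism of finite order `n` of a nonzero semisimple Lie algebra has a nonzero fixed point.
If it had none, put `f(a, b) = tr ((∑ ad (gᵃ bᵢ) ad bⁱ) gᵇ)` for dual bases `bᵢ`, `bⁱ` of the
Killing form. The element `∑ ⁅gᵃ bᵢ, bⁱ⁆` is fixed, hence zero, which gives
`f(a + b, b) = f(a, b)`; as `f` is also symmetric, `f(a, b) = f(gcd(a, b), 0)`. Since `∑ gᵃ = 0`,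
so that `∑ₐ f(a, b) = 0`, induction on `d` yields `f(d, 0) = 0` for all `d > 0`, whereas `f(n, 0)`
is the trace of the Casimir operator of the adjoint representation, which is the dimension.

By Lie's theorem the Killing form of the whole algebra pairs `⁅C, C⁆` to zero with `C`, and by
Fitting's lemma with everything, so `⁅C, C⁆` lies in the radical, that is, in the centre. So `C` is
nilpotent, and a nilpotent Engel subalgebra is Cartan. Finally `C ∩ F` is the Engel subalgebra of
`x` in `F`, and it is nilpotent by minimality.
-/

open LieAlgebra LieModule Module

section DualBasis

variable {K V M ι : Type*} [Field K] [AddCommGroup V] [Module K V] [AddCommGroup M] [Module K M]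
  [DecidableEq ι] {B : LinearMap.BilinForm K V}

lemma basis_repr_eq_apply_dualBasis [Finite ι] (hB : B.Nondegenerate) (hs : B.IsSymm)
    (b : Basis ι K V) (x : V) (i : ι) : b.repr x i = B x (B.dualBasis hB b i) := by
  conv_lhs => rw [← LinearMap.BilinForm.dualBasis_dualBasis hB hs b]
  exact LinearMap.BilinForm.dualBasis_repr_apply hB _ x i

variable [Fintype ι]

lemma trace_eq_sum_apply_dualBasis (hB : B.Nondegenerate) (hs : B.IsSymm) (b : Basis ι K V)
    (T : End K V) : LinearMap.trace K V T = ∑ i, B (T (b i)) (B.dualBasis hB b i) := by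
  simp only [LinearMap.trace_eq_matrix_trace K b, Matrix.trace, Matrix.diag_apply,
    LinearMap.toMatrix_apply, basis_repr_eq_apply_dualBasis hB hs b]

-- The tensor `∑ bᵢ ⊗ bⁱ` does not depend on the basis, so isometries of the form fix it.
lemma sum_map_map_dualBasis_eq (hB : B.Nondegenerate) (hs : B.IsSymm) (b : Basis ι K V)
    (e : V ≃ₗ[K] V) (he : ∀ x y, B (e x) (e y) = B x y) (φ : V →ₗ[K] V →ₗ[K] M) :
    ∑ i, φ (e (b i)) (e (B.dualBasis hB b i)) = ∑ i, φ (b i) (B.dualBasis hB b i) := by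
  set b' := B.dualBasis hB b
  have expand (i : ι) : e (b i) = ∑ j, B (b i) (e.symm (b' j)) • b j := by
    conv_lhs => rw [← b.sum_repr (e (b i))]
    refine Finset.sum_congr rfl fun j _ ↦ ?_
    rw [basis_repr_eq_apply_dualBasis hB hs, ← he (b i), e.apply_symm_apply]
  have collect (j : ι) : ∑ i, B (b i) (e.symm (b' j)) • e (b' i) = b' j := by
    conv_rhs => rw [← e.apply_symm_apply (b' j), ← b'.sum_repr (e.symm (b' j)), map_sum]
    refine Finset.sum_congr rfl fun i _ ↦ ?_
    rw [map_smul, LinearMap.BilinForm.dualBasis_repr_apply, hs.eq]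
  calc ∑ i, φ (e (b i)) (e (b' i))
      = ∑ i, ∑ j, B (b i) (e.symm (b' j)) • φ (b j) (e (b' i)) := by
        refine Finset.sum_congr rfl fun i _ ↦ ?_
        simp only [expand, map_sum, map_smul, LinearMap.sum_apply, LinearMap.smul_apply]
    _ = ∑ j, φ (b j) (∑ i, B (b i) (e.symm (b' j)) • e (b' i)) := by
        rw [Finset.sum_comm]
        simp only [map_sum, map_smul]
    _ = ∑ j, φ (b j) (b' j) := by simp only [collect]

end DualBasis

section Euclid

lemma eq_apply_gcd_zero {α : Type*} {f : ℕ → ℕ → α} (symm : ∀ a b, f a b = f b a)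
    (shift : ∀ a b, f (a + b) b = f a b) (a b : ℕ) : f a b = f (a.gcd b) 0 := by
  have add_mul (a b k : ℕ) : f (a + b * k) b = f a b := by
    induction k with
    | zero => rfl
    | succ k ih => rw [Nat.mul_succ, ← add_assoc, shift, ih]
  induction a, b using Nat.gcd.induction with
  | H0 b => rw [symm, Nat.gcd_zero_left]
  | H1 a b _ ih => rw [Nat.gcd_rec, ← ih, symm a b, ← add_mul (b % a) a (b / a), Nat.mod_add_div]

lemma apply_zero_eq_zero_of_sum_range_eq_zero {R : Type*} [Ring R] [IsDomain R] [CharZero R]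
    {f : ℕ → ℕ → R} {n : ℕ} (hn : 0 < n) (symm : ∀ a b, f a b = f b a)
    (shift : ∀ a b, f (a + b) b = f a b) (sum : ∀ b, ∑ a ∈ Finset.range n, f a b = 0)
    {d : ℕ} (hd : 0 < d) : f d 0 = 0 := by
  induction d using Nat.strong_induction_on with
  | _ d ih =>
    have term (a : ℕ) : f a d = if d ∣ a then f d 0 else 0 := by
      rw [eq_apply_gcd_zero symm shift]
      split_ifs with h
      · rw [Nat.gcd_eq_right h]
      · exact ih _ ((Nat.gcd_le_right a hd).lt_of_ne (mt Nat.gcd_eq_right_iff_dvd.mp h))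
          (Nat.gcd_pos_of_pos_right a hd)
    have hsum := sum d
    simp only [term, ← Finset.sum_filter, Finset.sum_const] at hsum
    refine (smul_eq_zero.mp hsum).resolve_left (Finset.card_ne_zero.mpr ⟨0, ?_⟩)
    simp [hn]

end Euclid

section Automorphism

variable {R A : Type*} [CommRing R] [LieRing A] [LieAlgebra R A]

/-- The Lie subalgebra of fixed points of an automorphism of a Lie algebra over any commutative
ring. -/
def fixedLieSubalgebra (g : A ≃ₗ⁅R⁆ A) : LieSubalgebra R A where
  __ := LinearMap.eqLocus (g : A →ₗ[R] A) LinearMap.id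
  lie_mem' {x y} hx hy := by
    change g x = x at hx
    change g y = y at hy
    change g ⁅x, y⁆ = ⁅x, y⁆
    rw [g.map_lie, hx, hy]

lemma apply_sum_range_pow_apply {M : Type*} [AddCommGroup M] [Module R M] {g : End R M} {n : ℕ}
    (hg : g ^ n = 1) (x : M) :
    g ((∑ a ∈ Finset.range n, g ^ a) x) = (∑ a ∈ Finset.range n, g ^ a) x := by
  have h := mul_geom_sum g n
  rw [hg, sub_self, sub_mul, one_mul, sub_eq_zero] at h
  exact LinearMap.congr_fun h x

lemma exists_lieEquiv_coe_eq_pow (g : A ≃ₗ⁅R⁆ A) (k : ℕ) :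
    ∃ τ : A ≃ₗ⁅R⁆ A, (τ : End R A) = (g : End R A) ^ k := by
  induction k with
  | zero => exact ⟨LieEquiv.refl, rfl⟩
  | succ k ih =>
    obtain ⟨τ, hτ⟩ := ih
    exact ⟨g.trans τ, by rw [pow_succ, ← hτ]; rfl⟩

lemma semiconjBy_ad (g : A ≃ₗ⁅R⁆ A) (x : A) :
    SemiconjBy (g : End R A) (ad R A x) (ad R A (g x)) :=
  LinearMap.ext fun y ↦ g.map_lie x y

lemma comap_incl_engel (U : LieSubalgebra R A) (x : U) :
    LieSubalgebra.comap U.incl (LieSubalgebra.engel R (x : A)) = LieSubalgebra.engel R x := by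
  ext y
  simp only [LieSubalgebra.mem_comap, LieSubalgebra.mem_engel_iff, LieSubalgebra.coe_incl,
    ← LieSubalgebra.coe_ad_pow, ZeroMemClass.coe_eq_zero]

lemma map_engel (g : A ≃ₗ⁅R⁆ A) (x : A) :
    (LieSubalgebra.engel R x).map (g : A →ₗ⁅R⁆ A) = LieSubalgebra.engel R (g x) := by
  have ad_pow_map (k : ℕ) (y : A) : (ad R A (g x) ^ k) (g y) = g ((ad R A x ^ k) y) :=
    (LinearMap.congr_fun ((semiconjBy_ad g x).pow_right k).eq y).symm
  have mem_iff (y : A) : g y ∈ LieSubalgebra.engel R (g x) ↔ y ∈ LieSubalgebra.engel R x := by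
    simp only [LieSubalgebra.mem_engel_iff, ad_pow_map, map_eq_zero_iff g g.injective]
  ext y
  obtain ⟨y, rfl⟩ := g.surjective y
  exact g.injective.mem_set_image.trans (mem_iff y).symm

end Automorphism

section KillingForm

variable {R A : Type*} [CommRing R] [LieRing A] [LieAlgebra R A]

lemma killingForm_isSymm : LinearMap.BilinForm.IsSymm (killingForm R A) :=
  ⟨fun x y ↦ traceForm_comm R A A x y⟩

lemma killingForm_ad_pow_apply (x u v : A) (k : ℕ) :
    killingForm R A u ((ad R A x ^ k) v) = (-1) ^ k * killingForm R A ((ad R A x ^ k) u) v := by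
  have skew (u v : A) : killingForm R A u (ad R A x v) = -killingForm R A (ad R A x u) v := by
    rw [ad_apply, ad_apply, traceForm_apply_lie_apply', neg_neg]
  induction k generalizing u with
  | zero => simp
  | succ k ih =>
    rw [pow_succ', Module.End.mul_apply, skew, ih, ← Module.End.mul_apply, ← pow_succ, pow_succ']
    ring

end KillingForm

section Casimir

variable {K A : Type*} [Field K] [LieRing A] [LieAlgebra K A] [FiniteDimensional K A]
  [IsKilling K A]

variable (K A) in
/-- The basis of a Lie algebra with nondegenerate Killing form that is dual to `finBasis K A`. -/
noncomputable def killingDualBasis : Basis (Fin (finrank K A)) K A :=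
  LinearMap.BilinForm.dualBasis (killingForm K A) (IsKilling.killingForm_nondegenerate K A)
    (finBasis K A)

/-- The trace of `(∑ ad (S bᵢ) ad bⁱ) T` for bases `bᵢ`, `bⁱ` dual with respect to the Killing
form: the trace of the Casimir element of the adjoint representation, twisted by the operators
`S` and `T`. -/
noncomputable def casimirTrace (S T : End K A) : K :=
  ∑ i, LinearMap.trace K A
    (ad K A (S (finBasis K A i)) * ad K A (killingDualBasis K A i) * T)

lemma casimirTrace_one_one : casimirTrace (1 : End K A) 1 = finrank K A := by
  have killingForm_eq_one (i : Fin (finrank K A)) :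
      killingForm K A (finBasis K A i) (killingDualBasis K A i) = 1 := by
    rw [killingDualBasis, LinearMap.BilinForm.apply_dualBasis_right _ killingForm_isSymm,
      if_pos rfl]
  simp only [killingForm_apply_apply, ← Module.End.mul_eq_comp] at killingForm_eq_one
  simp [casimirTrace, killingForm_eq_one]

lemma casimirTrace_sum_left {ι : Type*} (s : Finset ι) (S : ι → End K A) (T : End K A) :
    casimirTrace (∑ a ∈ s, S a) T = ∑ a ∈ s, casimirTrace (S a) T := by
  simp only [casimirTrace, LinearMap.sum_apply, map_sum, Finset.sum_mul]
  exact Finset.sum_comm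

lemma casimirTrace_comm (S T : End K A) : casimirTrace S T = casimirTrace T S := by
  have expand (S T : End K A) : casimirTrace S T =
      ∑ i, ∑ j, -killingForm K A ⁅killingDualBasis K A i, T (finBasis K A j)⁆
        ⁅S (finBasis K A i), killingDualBasis K A j⁆ := by
    refine Finset.sum_congr rfl fun i _ ↦ ?_
    rw [trace_eq_sum_apply_dualBasis (IsKilling.killingForm_nondegenerate K A)
      killingForm_isSymm (finBasis K A)]
    exact Finset.sum_congr rfl fun j _ ↦ traceForm_apply_lie_apply' K A A _ _ _
  rw [expand S, expand T, Finset.sum_comm]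
  refine Finset.sum_congr rfl fun j _ ↦ Finset.sum_congr rfl fun i _ ↦ ?_
  rw [traceForm_comm, ← lie_skew (S _), ← lie_skew (killingDualBasis K A i)]
  simp only [map_neg, LinearMap.neg_apply, neg_neg]

lemma sum_lie_killingDualBasis_eq_zero {g : A ≃ₗ⁅K⁆ A} (hfix : ∀ x, g x = x → x = 0)
    {S : End K A} (hS : Commute S (g : End K A)) :
    ∑ i, ⁅S (finBasis K A i), killingDualBasis K A i⁆ = 0 := by
  refine hfix _ ?_
  have invariant := sum_map_map_dualBasis_eq (IsKilling.killingForm_nondegenerate K A)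
    killingForm_isSymm (finBasis K A) g.toLinearEquiv (killingForm_of_equiv_apply g)
    ((ad K A : A →ₗ[K] End K A) ∘ₗ S)
  have map_lie (x y : A) : g ⁅S x, y⁆ = ⁅S (g x), g y⁆ := by
    rw [g.map_lie]
    exact congrArg (⁅·, g y⁆) (LinearMap.congr_fun hS.eq x).symm
  calc g (∑ i, ⁅S (finBasis K A i), killingDualBasis K A i⁆)
      = ∑ i, ⁅S (g (finBasis K A i)), g (killingDualBasis K A i)⁆ := by
        simp only [map_sum, map_lie]
    _ = ∑ i, ⁅S (finBasis K A i), killingDualBasis K A i⁆ := invariant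

lemma casimirTrace_mul_left {g τ : A ≃ₗ⁅K⁆ A} (hfix : ∀ x, g x = x → x = 0)
    (hτ : Commute (τ : End K A) (g : End K A)) {S : End K A} (hS : Commute S (g : End K A))
    (hSτ : Commute S (τ : End K A)) :
    casimirTrace (S * (τ : End K A)) τ = casimirTrace S τ := by
  have ad_mul_ad_comm :
      ∑ i, ad K A ((S * (τ : End K A)) (finBasis K A i)) * ad K A (killingDualBasis K A i) =
        ∑ i, ad K A (killingDualBasis K A i) * ad K A ((S * (τ : End K A)) (finBasis K A i)) := by
    have h := congrArg (ad K A) (sum_lie_killingDualBasis_eq_zero hfix (hS.mul_left hτ))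
    simpa only [map_sum, LieHom.map_lie, LieRing.of_associative_ring_bracket,
      Finset.sum_sub_distrib, map_zero, sub_eq_zero] using h
  calc casimirTrace (S * (τ : End K A)) τ
      = LinearMap.trace K A ((∑ i, ad K A (killingDualBasis K A i) *
          ad K A ((S * (τ : End K A)) (finBasis K A i))) * (τ : End K A)) := by
        rw [← ad_mul_ad_comm, Finset.sum_mul, map_sum, casimirTrace]
    _ = ∑ i, LinearMap.trace K A (ad K A (killingDualBasis K A i) *
          ((τ : End K A) * ad K A (S (finBasis K A i)))) := by
        rw [Finset.sum_mul, map_sum, hSτ.eq]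
        refine Finset.sum_congr rfl fun i _ ↦ ?_
        rw [mul_assoc, (semiconjBy_ad τ _).eq]
        rfl
    _ = casimirTrace S τ := by
        refine Finset.sum_congr rfl fun i _ ↦ ?_
        rw [← mul_assoc, LinearMap.trace_mul_comm, mul_assoc]

lemma subsingleton_of_forall_fixed_eq_zero [CharZero K] {g : A ≃ₗ⁅K⁆ A} {n : ℕ}
    (hn : 0 < n) (hg : (g : End K A) ^ n = 1) (hfix : ∀ x, g x = x → x = 0) : Subsingleton A := by
  let f (a b : ℕ) : K := casimirTrace ((g : End K A) ^ a) ((g : End K A) ^ b)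
  have shift (a b : ℕ) : f (a + b) b = f a b := by
    obtain ⟨τ, hτ⟩ := exists_lieEquiv_coe_eq_pow g b
    simp only [f, pow_add, ← hτ]
    refine casimirTrace_mul_left hfix ?_ (.pow_self _ _) ?_ <;> rw [hτ]
    exacts [.pow_self _ _, .pow_pow_self _ _ _]
  have sum (b : ℕ) : ∑ a ∈ Finset.range n, f a b = 0 := by
    have orbitSum_eq_zero : ∑ a ∈ Finset.range n, (g : End K A) ^ a = 0 :=
      LinearMap.ext fun x ↦ hfix _ (apply_sum_range_pow_apply hg x)
    rw [← casimirTrace_sum_left, orbitSum_eq_zero]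
    simp [casimirTrace]
  have finrank_eq_zero : (finrank K A : K) = 0 := by
    rw [← apply_zero_eq_zero_of_sum_range_eq_zero hn (fun _ _ ↦ casimirTrace_comm _ _) shift sum
      hn]
    simp only [hg, pow_zero, casimirTrace_one_one]
  exact finrank_zero_iff.mp (Nat.cast_eq_zero.mp finrank_eq_zero)

end Casimir

section Radical

variable {R A B : Type*} [CommRing R] [LieRing A] [LieAlgebra R A] [LieRing B] [LieAlgebra R B]

lemma derivedSeriesOfIdeal_comap_le (f : A →ₗ⁅R⁆ B) (J : LieIdeal R B) (k : ℕ) :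
    derivedSeriesOfIdeal R A k (J.comap f) ≤ (derivedSeriesOfIdeal R B k J).comap f := by
  induction k with
  | zero => exact le_rfl
  | succ k ih =>
    simp only [derivedSeriesOfIdeal_succ]
    exact (LieSubmodule.mono_lie ih ih).trans (LieIdeal.comap_bracket_le f)

lemma isSolvable_comap (f : A →ₗ⁅R⁆ B) (J : LieIdeal R B) [IsSolvable J] [IsSolvable f.ker] :
    IsSolvable (J.comap f) := by
  obtain ⟨k, hk⟩ := IsSolvable.solvable R J
  obtain ⟨l, hl⟩ := IsSolvable.solvable R f.ker
  rw [LieIdeal.derivedSeries_eq_bot_iff] at hk hl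
  apply IsSolvable.mk (R := R) (k := l + k)
  rw [LieIdeal.derivedSeries_eq_bot_iff, derivedSeriesOfIdeal_add, eq_bot_iff, ← hl]
  refine derivedSeriesOfIdeal_mono ((derivedSeriesOfIdeal_comap_le f J k).trans_eq ?_) l
  rw [hk]
  rfl

variable [IsNoetherian R A]

lemma map_mem_radical (g : A ≃ₗ⁅R⁆ A) {x : A} (hx : x ∈ radical R A) : g x ∈ radical R A := by
  have ker_eq_bot : (g.symm : A →ₗ⁅R⁆ A).ker = ⊥ :=
    (LieHom.ker_eq_bot _).mpr g.symm.injective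
  have : IsSolvable (g.symm : A →ₗ⁅R⁆ A).ker := by rw [ker_eq_bot]; infer_instance
  refine (LieIdeal.solvable_iff_le_radical R A _).mp
    (isSolvable_comap (g.symm : A →ₗ⁅R⁆ A) (radical R A)) ?_
  rw [LieIdeal.mem_comap]
  simpa using hx

lemma map_toSubmodule_radical (g : A ≃ₗ⁅R⁆ A) :
    (radical R A).toSubmodule.map (g.toLinearEquiv : A →ₗ[R] A) = (radical R A).toSubmodule := by
  refine le_antisymm (Submodule.map_le_iff_le_comap.mpr fun x hx ↦ map_mem_radical g hx)
    fun x hx ↦ ⟨g.symm x, map_mem_radical g.symm hx, g.apply_symm_apply x⟩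

end Radical

section Quotient

variable {R A : Type*} [CommRing R] [LieRing A] [LieAlgebra R A]

/-- The quotient map by an ideal, as a homomorphism of Lie algebras. -/
def quotientMk (I : LieIdeal R A) : A →ₗ⁅R⁆ A ⧸ I where
  toLinearMap := I.toSubmodule.mkQ
  map_lie' := rfl

lemma quotientMk_surjective (I : LieIdeal R A) : Function.Surjective (quotientMk I) :=
  I.toSubmodule.mkQ_surjective

lemma quotientMk_eq_zero {I : LieIdeal R A} {x : A} : quotientMk I x = 0 ↔ x ∈ I :=
  Submodule.Quotient.mk_eq_zero I.toSubmodule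

lemma ker_quotientMk (I : LieIdeal R A) : (quotientMk I).ker = I :=
  LieSubmodule.ext _ _ fun _ ↦ quotientMk_eq_zero

/-- The automorphism of `A ⧸ I` induced by an automorphism of `A` that maps `I` onto itself. -/
def quotientAut (I : LieIdeal R A) (g : A ≃ₗ⁅R⁆ A)
    (hI : I.toSubmodule.map (g.toLinearEquiv : A →ₗ[R] A) = I.toSubmodule) :
    (A ⧸ I) ≃ₗ⁅R⁆ (A ⧸ I) where
  __ := Submodule.Quotient.equiv I.toSubmodule I.toSubmodule g.toLinearEquiv hI
  map_lie' := by
    rintro ⟨x⟩ ⟨y⟩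
    exact congrArg (quotientMk I) (g.map_lie x y)

lemma quotientAut_pow_quotientMk {I : LieIdeal R A} {g : A ≃ₗ⁅R⁆ A}
    (hI : I.toSubmodule.map (g.toLinearEquiv : A →ₗ[R] A) = I.toSubmodule) (k : ℕ) (x : A) :
    ((quotientAut I g hI : End R (A ⧸ I)) ^ k) (quotientMk I x) =
      quotientMk I (((g : End R A) ^ k) x) := by
  induction k with
  | zero => rfl
  | succ k ih =>
    rw [pow_succ', Module.End.mul_apply, ih, pow_succ']
    rfl

instance hasTrivialRadical_quotient_radical [IsNoetherian R A] :
    HasTrivialRadical R (A ⧸ radical R A) := by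
  refine hasTrivialRadical_of_no_solvable_ideals fun J _ ↦ (LieSubmodule.eq_bot_iff J).mpr ?_
  have : IsSolvable (quotientMk (radical R A)).ker := by rw [ker_quotientMk]; infer_instance
  have comap_le := (LieIdeal.solvable_iff_le_radical R A _).mp
    (isSolvable_comap (quotientMk (radical R A)) J)
  intro y hy
  obtain ⟨x, rfl⟩ := quotientMk_surjective _ y
  exact quotientMk_eq_zero.mpr (comap_le (LieIdeal.mem_comap.mpr hy))

lemma isNilpotent_ad_quotientMk (I : LieIdeal R A) {x : A} (hx : IsNilpotent (ad R A x)) :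
    IsNilpotent (ad R (A ⧸ I) (quotientMk I x)) :=
  Module.End.IsNilpotent.mapQ (p := I.toSubmodule) (fun _ hy ↦ I.lie_mem hy) hx

end Quotient

section Solvability

variable {K A : Type*} [Field K] [CharZero K] [LieRing A] [LieAlgebra K A] [FiniteDimensional K A]
  {g : A ≃ₗ⁅K⁆ A} {n : ℕ}

lemma eq_zero_of_fixed_of_isNilpotent_ad_fixed [IsKilling K A] (hn : 0 < n)
    (hg : (g : End K A) ^ n = 1) (hnil : ∀ x, g x = x → IsNilpotent (ad K A x)) {x : A}
    (hx : g x = x) : x = 0 := by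
  let F := fixedLieSubalgebra g
  have : LieModule.IsNilpotent F A :=
    (LieModule.isNilpotent_iff_forall' (R := K)).mpr fun y ↦ hnil y y.2
  have killingForm_pow (y : A) (a : ℕ) :
      killingForm K A x (((g : End K A) ^ a) y) = killingForm K A x y := by
    induction a with
    | zero => rfl
    | succ a ih =>
      rw [pow_succ', ← ih]
      conv_lhs => rw [← hx]
      exact killingForm_of_equiv_apply g _ _
  have nsmul_killingForm (y : A) : n • killingForm K A x y = 0 := by
    let z : F := ⟨(∑ a ∈ Finset.range n, (g : End K A) ^ a) y, apply_sum_range_pow_apply hg y⟩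
    calc n • killingForm K A x y = killingForm K A x z := by
          simp only [z, LinearMap.sum_apply, map_sum, killingForm_pow, Finset.sum_const,
            Finset.card_range]
      _ = traceForm K F A ⟨x, hx⟩ z := rfl
      _ = 0 := by rw [traceForm_eq_zero_of_isNilpotent]; rfl
  refine (IsKilling.killingForm_nondegenerate K A).1 x fun y ↦ ?_
  exact (smul_eq_zero.mp (nsmul_killingForm y)).resolve_left hn.ne'

lemma isSolvable_of_isNilpotent_ad_fixed (hn : 0 < n) (hg : (g : End K A) ^ n = 1)
    (hnil : ∀ x, g x = x → IsNilpotent (ad K A x)) : IsSolvable A := by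
  let q := quotientMk (radical K A)
  let g' := quotientAut (radical K A) g (map_toSubmodule_radical g)
  have hg' : (g' : End K (A ⧸ radical K A)) ^ n = 1 := by
    refine LinearMap.ext fun y ↦ ?_
    obtain ⟨x, rfl⟩ := quotientMk_surjective _ y
    rw [quotientAut_pow_quotientMk, hg]
    rfl
  have hnil' (y : A ⧸ radical K A) (hy : g' y = y) : IsNilpotent (ad K _ y) := by
    obtain ⟨x, rfl⟩ := quotientMk_surjective _ y
    have q_pow_apply (a : ℕ) : q (((g : End K A) ^ a) x) = q x := by
      rw [← quotientAut_pow_quotientMk (map_toSubmodule_radical g), Module.End.pow_apply]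
      exact Function.iterate_fixed hy a
    have q_eq : q x = (n : K)⁻¹ • q ((∑ a ∈ Finset.range n, (g : End K A) ^ a) x) := by
      rw [eq_inv_smul_iff₀ (Nat.cast_ne_zero.mpr hn.ne'), Nat.cast_smul_eq_nsmul]
      simp only [LinearMap.sum_apply, map_sum, q_pow_apply, Finset.sum_const, Finset.card_range]
    rw [show quotientMk _ x = _ from q_eq, map_smul]
    exact (isNilpotent_ad_quotientMk _ (hnil _ (apply_sum_range_pow_apply hg x))).smul _
  have : Subsingleton (A ⧸ radical K A) := subsingleton_of_forall_fixed_eq_zero hn hg'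
    fun _ ↦ eq_zero_of_fixed_of_isNilpotent_ad_fixed hn hg' hnil'
  have radical_eq_top : radical K A = ⊤ :=
    eq_top_iff.mpr fun x _ ↦ quotientMk_eq_zero.mp (Subsingleton.elim _ _)
  have : IsSolvable (⊤ : LieIdeal K A) := radical_eq_top ▸ radicalIsSolvable K A
  exact (solvable_iff_equiv_solvable LieIdeal.topEquiv).mp this

end Solvability

section LieTheorem

open scoped TensorProduct

variable {K S V : Type*} [Field K] [CharZero K] [LieRing S] [LieAlgebra K S] [IsSolvable S]
  [AddCommGroup V] [Module K V] [FiniteDimensional K V] [LieRingModule S V] [LieModule K S V]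

lemma isNilpotent_toEnd_lie_mul_toEnd [IsAlgClosed K] (a b c : S) :
    IsNilpotent (toEnd K S V ⁅a, b⁆ * toEnd K S V c) := by
  set T := toEnd K S V ⁅a, b⁆ * toEnd K S V c
  let killed : Set (LieSubmodule K S V) := {N | ∃ k, ∀ v ∈ N, (T ^ k) v = 0}
  obtain ⟨N, ⟨k, hk⟩, hmax⟩ := (wellFounded_gt (α := LieSubmodule K S V)).has_min killed
    ⟨⊥, 0, fun v hv ↦ by simpa using hv⟩
  suffices N = ⊤ from ⟨k, LinearMap.ext fun v ↦ hk v (this ▸ LieSubmodule.mem_top v)⟩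
  by_contra hN
  let π := LieSubmodule.Quotient.mk' N
  have π_eq_zero {v : V} : π v = 0 ↔ v ∈ N := LieSubmodule.Quotient.mk_eq_zero N
  have : Nontrivial (V ⧸ N) :=
    Submodule.Quotient.nontrivial_iff.mpr (mt (LieSubmodule.toSubmodule_eq_top N).mp hN)
  obtain ⟨χ, hχ⟩ := exists_nontrivial_weightSpace_of_isSolvable K S (V ⧸ N)
  let N' := (weightSpace (V ⧸ N) χ).comap π
  have T_mem {v : V} (hv : v ∈ N') : T v ∈ N := by
    have lie_π (s : S) : ⁅s, π v⁆ = χ s • π v := (mem_weightSpace _ _).mp hv s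
    have lie_lie_π : ⁅⁅a, b⁆, π v⁆ = 0 := by
      rw [lie_lie]
      simp only [lie_π, lie_smul, smul_comm (χ a), sub_self]
    refine π_eq_zero.mp ?_
    calc π ⁅⁅a, b⁆, ⁅c, v⁆⁆ = ⁅⁅a, b⁆, ⁅c, π v⁆⁆ := by simp only [LieModuleHom.map_lie]
      _ = 0 := by rw [lie_π, lie_smul, lie_lie_π, smul_zero]
  have le_N' : N ≤ N' := fun v hv ↦ by
    rw [LieSubmodule.mem_comap, π_eq_zero.mpr hv]
    exact zero_mem _
  have N'_le : N' ≤ N := by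
    by_contra h
    refine hmax N' ⟨k + 1, fun v hv ↦ ?_⟩ (lt_of_le_not_ge le_N' h)
    rw [pow_succ, Module.End.mul_apply, hk _ (T_mem hv)]
  obtain ⟨⟨w, hw⟩, hw0⟩ := exists_ne (0 : weightSpace (V ⧸ N) χ)
  obtain ⟨v, rfl⟩ := LieSubmodule.Quotient.surjective_mk' N w
  exact hw0 (Subtype.ext (π_eq_zero.mpr (N'_le hw)))

lemma traceForm_lie_eq_zero_of_isSolvable (a b c : S) : traceForm K S V ⁅a, b⁆ c = 0 := by
  let E := AlgebraicClosure K
  have trace_eq_zero :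
      traceForm E (E ⊗[K] S) (E ⊗[K] V) ⁅(1 : E) ⊗ₜ[K] a, (1 : E) ⊗ₜ[K] b⁆ (1 ⊗ₜ c) = 0 :=
    (LinearMap.isNilpotent_trace_of_isNilpotent
      (isNilpotent_toEnd_lie_mul_toEnd (K := E) (V := E ⊗[K] V) _ _ _)).eq_zero
  simpa using trace_eq_zero

end LieTheorem

section Engel

variable {K A : Type*} [Field K] [LieRing A] [LieAlgebra K A] [FiniteDimensional K A]

lemma exists_engel_minimal [Infinite K] (U : LieSubalgebra K A) :
    ∃ x ∈ U, ∀ y ∈ U, y ∈ LieSubalgebra.engel K x →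
      LieSubalgebra.engel K x ≤ LieSubalgebra.engel K y := by
  let dim (y : U) : ℕ := finrank K (LieSubalgebra.engel K (y : A))
  let x := Function.argmin dim
  refine ⟨x, x.2, fun y hyU hy ↦ ?_⟩
  let U' : LieSubalgebra K A := U ⊓ LieSubalgebra.engel K (x : A)
  let E : {LieSubalgebra.engel K z | z ∈ U'} :=
    ⟨_, x, ⟨x.2, LieSubalgebra.self_mem_engel K _⟩, rfl⟩
  suffices E_isBot : IsBot E from E_isBot ⟨_, y, ⟨hyU, hy⟩, rfl⟩
  refine engel_isBot_of_isMin (Cardinal.natCast_le_aleph0.trans (Cardinal.aleph0_le_mk K)) U' E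
    inf_le_right ?_
  rintro ⟨_, z, hz, rfl⟩ le_E
  suffices LieSubalgebra.engel K z = LieSubalgebra.engel K (x : A) from this.ge
  exact LieSubalgebra.toSubmodule_injective
    (Submodule.eq_of_le_of_finrank_le le_E (Function.argmin_le dim ⟨z, hz.1⟩))

lemma lie_mem_radical_of_isSolvable_engel [CharZero K] {x a b : A}
    [IsSolvable (LieSubalgebra.engel K x)] (ha : a ∈ LieSubalgebra.engel K x)
    (hb : b ∈ LieSubalgebra.engel K x) : ⁅a, b⁆ ∈ radical K A := by
  apply killingCompl_top_le_radical K A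
  rw [LieIdeal.mem_killingCompl]
  intro y _
  rw [traceForm_comm]
  obtain ⟨m, hm⟩ := (LieSubalgebra.mem_engel_iff K _ _).mp (LieSubalgebra.lie_mem _ ha hb)
  obtain ⟨k, hk⟩ := (ad K A x).eventually_codisjoint_ker_pow_range_pow.exists_forall_of_atTop
  have fitting : y ∈ (ad K A x ^ (k + m)).ker ⊔ (ad K A x ^ (k + m)).range := by
    rw [(hk _ (Nat.le_add_right k m)).eq_top]
    exact Submodule.mem_top
  obtain ⟨c, hc, _, ⟨d, rfl⟩, rfl⟩ := Submodule.mem_sup.mp fitting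
  let a' : LieSubalgebra.engel K x := ⟨a, ha⟩
  let b' : LieSubalgebra.engel K x := ⟨b, hb⟩
  let c' : LieSubalgebra.engel K x := ⟨c, (LieSubalgebra.mem_engel_iff K _ _).mpr ⟨k + m, hc⟩⟩
  have killingForm_ker : killingForm K A ⁅a, b⁆ c = 0 :=
    traceForm_lie_eq_zero_of_isSolvable (K := K) (V := A) a' b' c'
  have killingForm_range : killingForm K A ⁅a, b⁆ ((ad K A x ^ (k + m)) d) = 0 := by
    rw [killingForm_ad_pow_apply, Module.End.pow_map_zero_of_le (Nat.le_add_left m k) hm, map_zero,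
      LinearMap.zero_apply, mul_zero]
  rw [map_add, killingForm_ker, killingForm_range, add_zero]

lemma isCartanSubalgebra_engel_of_isSolvable [CharZero K] (hred : LieAlgebra.IsReductive K A)
    (x : A) [IsSolvable (LieSubalgebra.engel K x)] :
    (LieSubalgebra.engel K x).IsCartanSubalgebra := by
  refine ⟨LieSubalgebra.isNilpotent_of_forall_le_engel _ fun y hy z hz ↦ ?_,
    LieSubalgebra.normalizer_engel K x⟩
  have lie_mem_center : ⁅y, z⁆ ∈ center K A := hred ▸ lie_mem_radical_of_isSolvable_engel hy hz
  refine (LieSubalgebra.mem_engel_iff K y z).mpr ⟨2, ?_⟩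
  simpa only [pow_two, Module.End.mul_apply, ad_apply]
    using (mem_maxTrivSubmodule _ _ _ _).mp lie_mem_center y

end Engel

section Main

variable {K A : Type*} [Field K] [CharZero K] [LieRing A] [LieAlgebra K A] [FiniteDimensional K A]

lemma isSolvable_engel_of_minimal {g : A ≃ₗ⁅K⁆ A} {n : ℕ} (hn : 0 < n) (hg : ∀ x, g^[n] x = x)
    {x : A} (hx : g x = x) (hmin : ∀ y, g y = y → y ∈ LieSubalgebra.engel K x →
      LieSubalgebra.engel K x ≤ LieSubalgebra.engel K y) :
    IsSolvable (LieSubalgebra.engel K x) := by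
  let g' := LieEquiv.ofSubalgebras (LieSubalgebra.engel K x) (LieSubalgebra.engel K x) g
    (by rw [map_engel, hx])
  have coe_iterate (y : LieSubalgebra.engel K x) (k : ℕ) : (g'^[k] y : A) = g^[k] y :=
    Function.Semiconj.iterate_right (f := Subtype.val) (fun _ ↦ rfl) k y
  refine isSolvable_of_isNilpotent_ad_fixed (g := g') hn (LinearMap.ext fun y ↦ ?_) fun y hy ↦ ?_
  · rw [Module.End.pow_apply]
    exact Subtype.ext ((coe_iterate y n).trans (hg y))
  · rw [Module.End.isNilpotent_iff_of_finite]
    intro z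
    obtain ⟨k, hk⟩ := (LieSubalgebra.mem_engel_iff K _ _).mp
      (hmin y (congrArg Subtype.val hy) y.2 z.2)
    exact ⟨k, Subtype.ext ((LieSubalgebra.coe_ad_pow K A _ y z k).trans hk)⟩

theorem exists_cartan_with_fixed_cartan_general (hred : LieAlgebra.IsReductive K A)
    (g : A ≃ₗ⁅K⁆ A) (n : ℕ) (hn : 0 < n) (hg : ∀ x, g^[n] x = x) :
    ∃ H : LieSubalgebra K A, H.IsCartanSubalgebra ∧
      (LieSubalgebra.comap (fixedLieSubalgebra g).incl H).IsCartanSubalgebra := by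
  obtain ⟨x, hx, hmin⟩ := exists_engel_minimal (fixedLieSubalgebra g)
  have := isSolvable_engel_of_minimal hn hg hx hmin
  refine ⟨_, isCartanSubalgebra_engel_of_isSolvable hred x, ?_⟩
  rw [comap_incl_engel _ ⟨x, hx⟩]
  refine ⟨LieSubalgebra.isNilpotent_of_forall_le_engel _ fun y hy ↦ ?_,
    LieSubalgebra.normalizer_engel K _⟩
  rw [← comap_incl_engel] at hy ⊢
  rw [← comap_incl_engel]
  exact fun z hz ↦ hmin y y.2 hy hz

end Main

/-- Let `L` be a finite-dimensional reductive complex Lie algebra and `g` an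
automorphism of `L` of finite order `n`.  Then there exists a Cartan subalgebra `H` of `L` such
that `H^g = H ∩ L^g` is a Cartan subalgebra of the fixed-point subalgebra `L^g`. -/
theorem exists_cartan_with_fixed_cartan
    [FiniteDimensional ℂ L] (hred : LieAlgebra.IsReductive ℂ L)
    (g : L ≃ₗ⁅ℂ⁆ L) (n : ℕ) (hn : 0 < n) (hg : ∀ x, (⇑g)^[n] x = x) :
    ∃ H : LieSubalgebra ℂ L, H.IsCartanSubalgebra ∧
      (LieSubalgebra.comap g.fixedSubalgebra.incl H).IsCartanSubalgebra :=
  exists_cartan_with_fixed_cartan_general hred g n hn hg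
end

section
/- Let n be a positive integer. For each divisor d of n define the rational number c_n(d) = (n/d²) · ∏_{p∣d}(−p) · ∏_{p∣gcd(d,n/d)}(1−p⁻¹) · ∏_{p∣(n/d)}(1+p⁻¹), where all products run over primes p. Then for every divisor t of n one has ∑_{d∣n} c_n(d)·gcd(t,d) = n/t. -/
open Finset

/-- The coefficients `c_n(d)` of the dimension formula:
`c_n(d) = (n/d²) · ∏_{p∣d}(−p) · ∏_{p∣gcd(d,n/d)}(1−p⁻¹) · ∏_{p∣(n/d)}(1+p⁻¹)`,
all products running over primes `p`. -/
noncomputable def dimFormulaCoeff (n d : ℕ) : ℚ :=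
  ((n : ℚ) / (d : ℚ) ^ 2) * (∏ p ∈ d.primeFactors, (-(p : ℚ))) *
    (∏ p ∈ (Nat.gcd d (n / d)).primeFactors, (1 - (p : ℚ)⁻¹)) *
    (∏ p ∈ (n / d).primeFactors, (1 + (p : ℚ)⁻¹))

/-!
For fixed `t`, both the sum and `n / gcd(t, n)` are multiplicative in `n`, so it suffices to treat
`n = p ^ k`. There `gcd(t, p ^ i)` equals `p ^ i` up to some exponent and is constant afterwards,
so the sum splits into a head `∑ c(p ^ i) p ^ i` and a tail `∑ c(p ^ i)`, each of which telescopes.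
-/

theorem prod_primeFactors_mul_of_coprime {M : Type*} [CommMonoid M] {m n : ℕ}
    (h : m.Coprime n) (f : ℕ → M) :
    ∏ p ∈ (m * n).primeFactors, f p =
      (∏ p ∈ m.primeFactors, f p) * ∏ p ∈ n.primeFactors, f p := by
  rw [h.primeFactors_mul, prod_union h.disjoint_primeFactors]

theorem sum_divisors_mul_of_coprime {M : Type*} [AddCommMonoid M] {m n : ℕ}
    (h : m.Coprime n) (f : ℕ → M) :
    ∑ d ∈ (m * n).divisors, f d = ∑ d ∈ m.divisors, ∑ e ∈ n.divisors, f (d * e) := by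
  rw [Nat.divisors_mul, mul_def, sum_image h.mul_injOn_divisors, sum_product]

theorem gcd_mul_mul_of_coprime {a b c d : ℕ} (hcd : c.Coprime d) (hbc : b.Coprime c)
    (had : a.Coprime d) : Nat.gcd (a * b) (c * d) = Nat.gcd a c * Nat.gcd b d := by
  rw [hcd.gcd_mul, hbc.gcd_mul_right_cancel, had.gcd_mul_left_cancel]

theorem dimFormulaCoeff_mul_of_coprime {m n d e : ℕ} (h : m.Coprime n) (hd : d ∣ m)
    (he : e ∣ n) :
    dimFormulaCoeff (m * n) (d * e) = dimFormulaCoeff m d * dimFormulaCoeff n e := by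
  have coprime_of_dvd {a b : ℕ} (ha : a ∣ m) (hb : b ∣ n) : a.Coprime b :=
    (h.coprime_dvd_left ha).coprime_dvd_right hb
  have hm : m / d ∣ m := Nat.div_dvd_of_dvd hd
  have hn : n / e ∣ n := Nat.div_dvd_of_dvd he
  have hquot : (m / d).Coprime (n / e) := coprime_of_dvd hm hn
  have hgcd : (d.gcd (m / d)).Coprime (e.gcd (n / e)) :=
    coprime_of_dvd ((Nat.gcd_dvd_left _ _).trans hd) ((Nat.gcd_dvd_left _ _).trans he)
  simp only [dimFormulaCoeff]
  rw [Nat.mul_div_mul_comm hd he,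
    gcd_mul_mul_of_coprime hquot (coprime_of_dvd hm he).symm (coprime_of_dvd hd hn),
    prod_primeFactors_mul_of_coprime (coprime_of_dvd hd he),
    prod_primeFactors_mul_of_coprime hgcd, prod_primeFactors_mul_of_coprime hquot]
  push_cast
  rw [mul_pow, mul_div_mul_comm]
  ring

theorem sum_dimFormulaCoeff_mul_of_coprime {m n : ℕ} (h : m.Coprime n) {f : ℕ → ℚ}
    (hf : ∀ d e, d.Coprime e → f (d * e) = f d * f e) :
    ∑ d ∈ (m * n).divisors, dimFormulaCoeff (m * n) d * f d =
      (∑ d ∈ m.divisors, dimFormulaCoeff m d * f d) *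
        ∑ e ∈ n.divisors, dimFormulaCoeff n e * f e := by
  rw [sum_divisors_mul_of_coprime h, sum_mul_sum]
  refine sum_congr rfl fun d hd ↦ sum_congr rfl fun e he ↦ ?_
  have hdm : d ∣ m := Nat.dvd_of_mem_divisors hd
  have hen : e ∣ n := Nat.dvd_of_mem_divisors he
  have hde : d.Coprime e := (h.coprime_dvd_left hdm).coprime_dvd_right hen
  rw [dimFormulaCoeff_mul_of_coprime h hdm hen, hf d e hde, mul_mul_mul_comm]

theorem dimFormulaCoeff_one_right (n : ℕ) :
    dimFormulaCoeff n 1 = n * ∏ p ∈ n.primeFactors, (1 + (p : ℚ)⁻¹) := by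
  simp [dimFormulaCoeff]

theorem dimFormulaCoeff_self {n : ℕ} (hn : n ≠ 0) :
    dimFormulaCoeff n n = (∏ p ∈ n.primeFactors, -(p : ℚ)) / n := by
  have hn' : (n : ℚ) ≠ 0 := Nat.cast_ne_zero.2 hn
  simp only [dimFormulaCoeff, Nat.div_self (Nat.pos_of_ne_zero hn), Nat.gcd_one_right,
    Nat.primeFactors_one, prod_empty, mul_one]
  field_simp

theorem dimFormulaCoeff_prime_pow {p k i : ℕ} (hp : p.Prime) (hi : i ≠ 0) (hik : i < k) :
    dimFormulaCoeff (p ^ k) (p ^ i) =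
      -((p : ℚ) ^ k / ((p : ℚ) ^ i) ^ 2 * (p - (p : ℚ)⁻¹)) := by
  have hp0 : (p : ℚ) ≠ 0 := Nat.cast_ne_zero.2 hp.ne_zero
  have hki : k - i ≠ 0 := Nat.sub_ne_zero_of_lt hik
  have hgcd : (Nat.gcd (p ^ i) (p ^ (k - i))).primeFactors = {p} := by
    rw [Nat.primeFactors_gcd (pow_ne_zero _ hp.ne_zero) (pow_ne_zero _ hp.ne_zero),
      Nat.primeFactors_prime_pow hi hp, Nat.primeFactors_prime_pow hki hp, inter_self]
  rw [dimFormulaCoeff, Nat.pow_div hik.le hp.pos, hgcd, Nat.primeFactors_prime_pow hi hp,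
    Nat.primeFactors_prime_pow hki hp]
  simp only [prod_singleton, Nat.cast_pow]
  field_simp
  ring

theorem sum_range_dimFormulaCoeff_prime_pow_mul_pow {p k j : ℕ} (hp : p.Prime) (hj : j < k) :
    ∑ i ∈ range (j + 1), dimFormulaCoeff (p ^ k) (p ^ i) * (p : ℚ) ^ i =
      (p : ℚ) ^ k / (p : ℚ) ^ j * (1 + (p : ℚ)⁻¹) := by
  have hp0 : (p : ℚ) ≠ 0 := Nat.cast_ne_zero.2 hp.ne_zero
  induction j with
  | zero =>
    simp [dimFormulaCoeff_one_right, Nat.primeFactors_prime_pow hj.ne' hp]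
  | succ j ih =>
    rw [sum_range_succ, ih (by lia), dimFormulaCoeff_prime_pow hp j.add_one_ne_zero hj]
    field_simp
    ring

theorem sum_Ico_dimFormulaCoeff_prime_pow {p k j : ℕ} (hp : p.Prime) (hj : j ≠ 0) (hjk : j ≤ k) :
    ∑ i ∈ Ico j (k + 1), dimFormulaCoeff (p ^ k) (p ^ i) =
      -((p : ℚ) ^ k / ((p : ℚ) ^ j) ^ 2 * p) := by
  have hp0 : (p : ℚ) ≠ 0 := Nat.cast_ne_zero.2 hp.ne_zero
  induction hjk using Nat.decreasingInduction with
  | self =>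
    rw [Nat.Ico_succ_singleton, sum_singleton, dimFormulaCoeff_self (pow_ne_zero _ hp.ne_zero),
      Nat.primeFactors_prime_pow hj hp, prod_singleton, Nat.cast_pow]
    field_simp
  | of_succ j hjk ih =>
    rw [sum_eq_sum_Ico_succ_bot (by lia), ih j.add_one_ne_zero, dimFormulaCoeff_prime_pow hp hj hjk]
    field_simp
    ring

theorem sum_dimFormulaCoeff_prime_pow_mul_gcd_pow {p k j : ℕ} (hp : p.Prime) (hk : k ≠ 0)
    (hj : j ≤ k) :
    ∑ i ∈ range (k + 1), dimFormulaCoeff (p ^ k) (p ^ i) * (Nat.gcd (p ^ j) (p ^ i) : ℚ) =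
      (p : ℚ) ^ k / (p : ℚ) ^ j := by
  have hp0 : (p : ℚ) ≠ 0 := Nat.cast_ne_zero.2 hp.ne_zero
  -- For `j = k` split before `k`: the closed form of the head fails for the full range.
  obtain ⟨l, hlk, hjl, hlj⟩ : ∃ l < k, j ≤ l + 1 ∧ l ≤ j := by
    rcases hj.lt_or_eq with hjk | rfl
    · exact ⟨j, hjk, by lia, le_rfl⟩
    · exact ⟨j - 1, by lia, by lia, by lia⟩
  have hhead : ∀ i ∈ range (l + 1), Nat.gcd (p ^ j) (p ^ i) = p ^ i := fun i hi ↦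
    Nat.gcd_eq_right (pow_dvd_pow p (by grind))
  have htail : ∀ i ∈ Ico (l + 1) (k + 1), Nat.gcd (p ^ j) (p ^ i) = p ^ j := fun i hi ↦
    Nat.gcd_eq_left (pow_dvd_pow p (by grind))
  calc
    _ = ∑ i ∈ range (l + 1), dimFormulaCoeff (p ^ k) (p ^ i) * (p : ℚ) ^ i +
        (∑ i ∈ Ico (l + 1) (k + 1), dimFormulaCoeff (p ^ k) (p ^ i)) * (p : ℚ) ^ j := by
      rw [← sum_range_add_sum_Ico _ (show l + 1 ≤ k + 1 by lia), sum_mul]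
      congr 1
      · exact sum_congr rfl fun i hi ↦ by rw [hhead i hi, Nat.cast_pow]
      · exact sum_congr rfl fun i hi ↦ by rw [htail i hi, Nat.cast_pow]
    _ = (p : ℚ) ^ k / (p : ℚ) ^ l * (1 + (p : ℚ)⁻¹) -
        (p : ℚ) ^ k / ((p : ℚ) ^ (l + 1)) ^ 2 * p * (p : ℚ) ^ j := by
      rw [sum_range_dimFormulaCoeff_prime_pow_mul_pow hp hlk,
        sum_Ico_dimFormulaCoeff_prime_pow hp l.add_one_ne_zero hlk]
      ring
    _ = (p : ℚ) ^ k / (p : ℚ) ^ j := by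
      obtain rfl | rfl : j = l ∨ j = l + 1 := by lia
      all_goals
        field_simp
        ring

theorem sum_dimFormulaCoeff_prime_pow_mul_gcd {p k : ℕ} (hp : p.Prime) (hk : k ≠ 0) (t : ℕ) :
    ∑ d ∈ (p ^ k).divisors, dimFormulaCoeff (p ^ k) d * (Nat.gcd t d : ℚ) =
      ((p ^ k : ℕ) : ℚ) / (Nat.gcd t (p ^ k) : ℚ) := by
  obtain ⟨j, hj, hgcd⟩ := (Nat.dvd_prime_pow hp).1 (Nat.gcd_dvd_right t (p ^ k))
  have gcd_eq : ∀ i ∈ range (k + 1), Nat.gcd t (p ^ i) = Nat.gcd (p ^ j) (p ^ i) := fun i hi ↦ by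
    rw [← hgcd, Nat.gcd_assoc, Nat.gcd_eq_right (pow_dvd_pow p (mem_range_succ_iff.1 hi))]
  rw [Nat.sum_divisors_prime_pow hp, hgcd, Nat.cast_pow, Nat.cast_pow,
    ← sum_dimFormulaCoeff_prime_pow_mul_gcd_pow hp hk hj]
  exact sum_congr rfl fun i hi ↦ by rw [gcd_eq i hi]

theorem sum_dimFormulaCoeff_mul_gcd_general {n : ℕ} (hn : n ≠ 0) (t : ℕ) :
    ∑ d ∈ n.divisors, dimFormulaCoeff n d * (Nat.gcd t d : ℚ) =
      (n : ℚ) / (Nat.gcd t n : ℚ) := by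
  induction n using Nat.recOnPosPrimePosCoprime with
  | zero => exact absurd rfl hn
  | one => simp [dimFormulaCoeff_self]
  | prime_pow p k hp hk => exact sum_dimFormulaCoeff_prime_pow_mul_gcd hp hk.ne' t
  | coprime a b ha hb hab iha ihb =>
    have gcd_mul : ∀ d e : ℕ, d.Coprime e →
        (Nat.gcd t (d * e) : ℚ) = (Nat.gcd t d : ℚ) * (Nat.gcd t e : ℚ) := fun d e hde ↦ by
      rw [hde.gcd_mul, Nat.cast_mul]
    rw [sum_dimFormulaCoeff_mul_of_coprime hab gcd_mul, iha (by lia), ihb (by lia),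
      gcd_mul a b hab, Nat.cast_mul, mul_div_mul_comm]

/-- For every positive integer `n` and every divisor `t` of `n`,
`∑_{d∣n} c_n(d) · gcd(t,d) = n/t`. -/
theorem sum_dimFormulaCoeff_mul_gcd (n : ℕ) (hn : 0 < n) (t : ℕ) (ht : t ∣ n) :
    ∑ d ∈ n.divisors, dimFormulaCoeff n d * (Nat.gcd t d : ℚ) = (n : ℚ) / (t : ℚ) := by
  rw [sum_dimFormulaCoeff_mul_gcd_general hn.ne' t, Nat.gcd_eq_left ht]
end

section
/- Let n be a positive integer. The linear system ∑_{d∣n} a_d·gcd(t,d) = n/t (one equation for each divisor t of n) has at most one solution (a_d)_{d∣n} in the rationals; consequently, if rationals (a_d)_{d∣n} satisfy ∑_{d∣n} a_d·gcd(t,d) = n/t for all divisors t of n, then a_d = c_n(d) for every divisor d of n, where c_n(d) = (n/d²) · ∏_{p∣d}(−p) · ∏_{p∣gcd(d,n/d)}(1−p⁻¹) · ∏_{p∣(n/d)}(1+p⁻¹) with products over primes p. -/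
open Finset

/-!
The identity `gcd(t, d) = ∑_{k ∣ t, k ∣ d} φ(k)` factors the matrix of the system into two
triangular ones. With `A(k) = ∑_{k ∣ d ∣ n} a_d`, the system reads
`∑_{k ∣ t} φ(k) A(k) = n / t`, and Möbius inversion over the divisors of `n` forces
`A(k) = n · g(k)` with `g(k) = k⁻² ∏_{p ∣ k} (-p)`. A dual Möbius inversion, over multiples
instead of divisors, forces `a_d = n ∑_{m ∣ n/d} μ(m) g(dm)`. Since `g` is multiplicative, so is
`m ↦ g(dm) / g(d)`, and `a_d` is `n · g(d)` times an Euler product over the primes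
`p ∣ n/d`, with factor `1 - p⁻² = (1 - p⁻¹)(1 + p⁻¹)` if `p ∣ d` and `1 + p⁻¹` otherwise.
-/

open ArithmeticFunction
open scoped ArithmeticFunction.Moebius ArithmeticFunction.zeta Nat

theorem sum_mul_gcd_eq_sum_totient_mul {R : Type*} [NonAssocSemiring R] (s : Finset ℕ) (a : ℕ → R)
    {t : ℕ} (ht : t ≠ 0) :
    ∑ d ∈ s, a d * (t.gcd d : R) = ∑ k ∈ t.divisors, (φ k : R) * ∑ d ∈ s with k ∣ d, a d := by
  have gcd_eq (d : ℕ) : (t.gcd d : R) = ∑ k ∈ t.divisors with k ∣ d, (φ k : R) := by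
    have divisors_gcd : (t.gcd d).divisors = {k ∈ t.divisors | k ∣ d} := by
      ext k
      simp [Nat.dvd_gcd_iff, ht]
    rw [← divisors_gcd, ← Nat.cast_sum, Nat.sum_totient]
  simp only [gcd_eq, mul_sum, sum_filter, mul_ite, mul_zero, Nat.cast_comm]
  exact sum_comm

theorem sum_divisors_moebius (n : ℕ) : ∑ m ∈ n.divisors, μ m = if n = 1 then 1 else 0 := by
  rw [← coe_mul_zeta_apply, moebius_mul_coe_zeta, one_apply]

theorem sum_moebius_filter_mul_dvd {n d l : ℕ} (hn : n ≠ 0) (hd : d ∣ n) (hl : l ∣ n) :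
    ∑ m ∈ (n / d).divisors with d * m ∣ l, μ m = if l = d then 1 else 0 := by
  have hd_pos : 0 < d := Nat.pos_of_dvd_of_pos hd hn.pos
  have quotient_ne_zero : n / d ≠ 0 := ne_zero_of_dvd_ne_zero hn (Nat.div_dvd_of_dvd hd)
  by_cases hdl : d ∣ l
  · obtain ⟨j, rfl⟩ := hdl
    have hj : j ∣ n / d := Nat.dvd_div_of_mul_dvd hl
    simp only [Nat.mul_dvd_mul_iff_left hd_pos, Nat.divisors_filter_dvd_of_dvd quotient_ne_zero hj,
      sum_divisors_moebius, Nat.mul_eq_left hd_pos.ne']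
  · have not_dvd (m : ℕ) : ¬ d * m ∣ l := fun h ↦ hdl (dvd_of_mul_right_dvd h)
    have l_ne_d : l ≠ d := fun h ↦ hdl h.symm.dvd
    simp [not_dvd, l_ne_d]

theorem sum_moebius_smul_sum_multiples {M : Type*} [AddCommGroup M] (a : ℕ → M) {n d : ℕ}
    (hn : n ≠ 0) (hd : d ∣ n) :
    ∑ m ∈ (n / d).divisors, μ m • ∑ l ∈ n.divisors with d * m ∣ l, a l = a d :=
  calc ∑ m ∈ (n / d).divisors, μ m • ∑ l ∈ n.divisors with d * m ∣ l, a l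
    _ = ∑ l ∈ n.divisors, (∑ m ∈ (n / d).divisors with d * m ∣ l, μ m) • a l := by
      simp only [smul_sum, sum_smul, sum_filter, ite_smul, smul_ite, smul_zero, zero_smul]
      exact sum_comm
    _ = ∑ l ∈ n.divisors, (if l = d then 1 else 0 : ℤ) • a l :=
      sum_congr rfl fun l hl ↦ by
        rw [sum_moebius_filter_mul_dvd hn hd (Nat.dvd_of_mem_divisors hl)]
    _ = a d := by
      simp [ite_smul, hn, hd]

theorem sum_divisors_moebius_mul_eq_prod {R : Type*} [CommRing R] {f : ArithmeticFunction R}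
    (hf : f.IsMultiplicative) {n : ℕ} (hn : n ≠ 0) :
    ∑ m ∈ n.divisors, (μ m : R) * f m = ∏ p ∈ n.primeFactors, (1 - f p) := by
  have convolution_eq : (μ : ArithmeticFunction R).pmul f * ζ = prodPrimeFactors (1 - f ·) := by
    rw [((isMultiplicative_moebius.intCast.pmul hf).mul
      isMultiplicative_zeta.natCast).eq_iff_eq_on_prime_powers _ _
        (IsMultiplicative.prodPrimeFactors _)]
    intro p i hp
    rw [coe_mul_zeta_apply, Nat.sum_divisors_prime_pow hp,
      prodPrimeFactors_apply (pow_ne_zero i hp.ne_zero)]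
    cases i with
    | zero => simp [hf.map_one]
    | succ i =>
      simp [sum_range_succ', moebius_apply_prime_pow, hp, hf.map_one,
        Nat.primeFactors_prime_pow, neg_add_eq_sub]
  calc ∑ m ∈ n.divisors, (μ m : R) * f m
    _ = ((μ : ArithmeticFunction R).pmul f * ζ) n := by
      simp only [coe_mul_zeta_apply, pmul_apply, intCoe_apply]
    _ = ∏ p ∈ n.primeFactors, (1 - f p) := by rw [convolution_eq, prodPrimeFactors_apply hn]

theorem map_mul_mul_mul_map_of_coprime {R : Type*} [CommMonoidWithZero R] {f : ArithmeticFunction R}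
    (hf : f.IsMultiplicative) (d : ℕ) {m k : ℕ} (hmk : m.Coprime k) :
    f (d * (m * k)) * f d = f (d * m) * f (d * k) := by
  simpa [Nat.lcm_mul_left, Nat.gcd_mul_left, hmk.lcm_eq_mul, hmk.gcd_eq_one] using
    hf.lcm_apply_mul_gcd_apply (x := d * m) (y := d * k)

theorem sum_divisors_moebius_mul_map_mul {K : Type*} [Field K] {f : ArithmeticFunction K}
    (hf : f.IsMultiplicative) {d N : ℕ} (hfd : f d ≠ 0) (hN : N ≠ 0) :
    ∑ m ∈ N.divisors, (μ m : K) * f (d * m) =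
      f d * ∏ p ∈ N.primeFactors, (1 - f (d * p) / f d) := by
  let ratio : ArithmeticFunction K := ⟨fun m ↦ f (d * m) / f d, by simp⟩
  have ratio_isMultiplicative : ratio.IsMultiplicative := by
    refine ⟨by simp [ratio, hfd], fun {m k} hmk ↦ ?_⟩
    simp only [ratio, coe_mk]
    field_simp
    linear_combination map_mul_mul_mul_map_of_coprime hf d hmk
  have f_mul_eq (m : ℕ) : f (d * m) = f d * ratio m := by
    simp only [ratio, coe_mk]
    field_simp
  calc ∑ m ∈ N.divisors, (μ m : K) * f (d * m)
    _ = f d * ∑ m ∈ N.divisors, (μ m : K) * ratio m := by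
      simp only [f_mul_eq, mul_sum, mul_left_comm]
    _ = f d * ∏ p ∈ N.primeFactors, (1 - f (d * p) / f d) := by
      rw [sum_divisors_moebius_mul_eq_prod ratio_isMultiplicative hN]
      rfl

theorem totient_mul_prod_neg_primeFactors (R : Type*) [CommRing R] (k : ℕ) :
    (φ k : R) * ∏ p ∈ k.primeFactors, (-(p : R)) = k * ∏ p ∈ k.primeFactors, (1 - (p : R)) := by
  have cast_pred_primeFactors : ∏ p ∈ k.primeFactors, ((p - 1 : ℕ) : R) =
      ∏ p ∈ k.primeFactors, ((p : R) - 1) :=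
    prod_congr rfl fun p hp ↦ Nat.cast_pred (Nat.prime_of_mem_primeFactors hp).pos
  have totient_mul_prod := congrArg (Nat.cast (R := R)) (Nat.totient_mul_prod_primeFactors k)
  push_cast [cast_pred_primeFactors] at totient_mul_prod
  simp only [← neg_sub _ (1 : R), prod_neg]
  linear_combination (-1) ^ #k.primeFactors * totient_mul_prod

/-- The function `k ↦ k⁻² ∏_{p ∣ k} (-p)` on positive integers, extended by `0` at `0`. It is the
function `g` with `∑_{k ∣ d ∣ n} a_d = n · g(k)` for every solution `(a_d)` of the gcd system. -/
def signedRadicalDivSq (K : Type*) [Field K] : ArithmeticFunction K :=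
  (prodPrimeFactors fun p ↦ -(p : K)).pdiv (ArithmeticFunction.pow 2 : ArithmeticFunction ℕ)

namespace signedRadicalDivSq

variable (K : Type*) [Field K]

theorem isMultiplicative : (signedRadicalDivSq K).IsMultiplicative :=
  (IsMultiplicative.prodPrimeFactors _).pdiv isMultiplicative_pow.natCast

variable {K}

theorem apply_of_ne_zero {k : ℕ} (hk : k ≠ 0) :
    signedRadicalDivSq K k = (∏ p ∈ k.primeFactors, (-(p : K))) / (k : K) ^ 2 := by
  simp [signedRadicalDivSq, prodPrimeFactors_apply hk]

variable [CharZero K]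

theorem apply_ne_zero {k : ℕ} (hk : k ≠ 0) : signedRadicalDivSq K k ≠ 0 := by
  rw [apply_of_ne_zero hk]
  refine div_ne_zero (prod_ne_zero_iff.2 fun p hp ↦ ?_) (by positivity)
  exact neg_ne_zero.2 (Nat.cast_ne_zero.2 (Nat.prime_of_mem_primeFactors hp).ne_zero)

theorem apply_mul_prime {d p : ℕ} (hd : d ≠ 0) (hp : p.Prime) :
    signedRadicalDivSq K (d * p) =
      signedRadicalDivSq K d * if p ∣ d then ((p : K) ^ 2)⁻¹ else -(p : K)⁻¹ := by
  have p_ne_zero : (p : K) ≠ 0 := Nat.cast_ne_zero.2 hp.ne_zero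
  split_ifs with hpd
  · have primeFactors_eq : (d * p).primeFactors = d.primeFactors := by
      simp [Nat.primeFactors_mul hd hp.ne_zero, hp.primeFactors, hp.mem_primeFactors hpd hd]
    rw [apply_of_ne_zero (mul_ne_zero hd hp.ne_zero), apply_of_ne_zero hd, primeFactors_eq]
    push_cast
    field_simp
  · have hcoprime : d.Coprime p := ((hp.coprime_iff_not_dvd).2 hpd).symm
    rw [(isMultiplicative K).map_mul_of_coprime hcoprime, apply_of_ne_zero hp.ne_zero,
      hp.primeFactors, prod_singleton]
    field_simp

theorem one_sub_apply_mul_prime_div {d p : ℕ} (hd : d ≠ 0) (hp : p.Prime) :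
    1 - signedRadicalDivSq K (d * p) / signedRadicalDivSq K d =
      (if p ∣ d then 1 - (p : K)⁻¹ else 1) * (1 + (p : K)⁻¹) := by
  rw [apply_mul_prime hd hp, mul_div_cancel_left₀ _ (apply_ne_zero hd)]
  split_ifs <;> ring

end signedRadicalDivSq

theorem mul_sum_moebius_mul_signedRadicalDivSq (K : Type*) [Field K] [CharZero K] {n d : ℕ}
    (hn : n ≠ 0) (hd : d ∣ n) :
    (n : K) * ∑ m ∈ (n / d).divisors, (μ m : K) * signedRadicalDivSq K (d * m) =
      (dimFormulaCoeff n d : K) := by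
  have d_ne_zero : d ≠ 0 := ne_zero_of_dvd_ne_zero hn hd
  have quotient_ne_zero : n / d ≠ 0 := ne_zero_of_dvd_ne_zero hn (Nat.div_dvd_of_dvd hd)
  have filter_dvd_eq : {p ∈ (n / d).primeFactors | p ∣ d} = (d.gcd (n / d)).primeFactors := by
    rw [Nat.primeFactors_gcd d_ne_zero quotient_ne_zero]
    grind
  have euler_product :
      ∏ p ∈ (n / d).primeFactors,
          (1 - signedRadicalDivSq K (d * p) / signedRadicalDivSq K d) =
        (∏ p ∈ (d.gcd (n / d)).primeFactors, (1 - (p : K)⁻¹)) *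
          ∏ p ∈ (n / d).primeFactors, (1 + (p : K)⁻¹) := by
    rw [← filter_dvd_eq, prod_filter, ← prod_mul_distrib]
    exact prod_congr rfl fun p hp ↦
      signedRadicalDivSq.one_sub_apply_mul_prime_div d_ne_zero (Nat.prime_of_mem_primeFactors hp)
  rw [sum_divisors_moebius_mul_map_mul (signedRadicalDivSq.isMultiplicative K)
    (signedRadicalDivSq.apply_ne_zero d_ne_zero) quotient_ne_zero, euler_product,
    signedRadicalDivSq.apply_of_ne_zero d_ne_zero, dimFormulaCoeff]
  push_cast
  ring

theorem sum_divisorsAntidiagonal_moebius_mul_div {K : Type*} [Field K] [CharZero K] (c : K)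
    {k : ℕ} (hk : k ≠ 0) :
    ∑ x ∈ k.divisorsAntidiagonal, (μ x.1 : K) * (c / (x.2 : K)) =
      c / k * ∏ p ∈ k.primeFactors, (1 - (p : K)) := by
  have sum_moebius_mul_self := sum_divisors_moebius_mul_eq_prod
    (f := (ArithmeticFunction.id : ArithmeticFunction K)) isMultiplicative_id.natCast hk
  simp only [natCoe_apply, id_apply] at sum_moebius_mul_self
  rw [← sum_moebius_mul_self, mul_sum,
    Nat.sum_divisorsAntidiagonal fun m l ↦ (μ m : K) * (c / (l : K))]
  refine sum_congr rfl fun m hm ↦ ?_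
  rw [Nat.cast_div_charZero (Nat.dvd_of_mem_divisors hm), div_div_eq_mul_div]
  ring

theorem sum_multiples_eq_of_sum_mul_gcd_eq {K : Type*} [Field K] [CharZero K] {n : ℕ} (hn : n ≠ 0)
    {a : ℕ → K} (ha : ∀ t, t ∣ n → ∑ d ∈ n.divisors, a d * (t.gcd d : K) = n / t)
    {k : ℕ} (hk : k ∣ n) :
    ∑ d ∈ n.divisors with k ∣ d, a d = n * signedRadicalDivSq K k := by
  have k_ne_zero : k ≠ 0 := ne_zero_of_dvd_ne_zero hn hk
  have totient_ne_zero : (φ k : K) ≠ 0 := Nat.cast_ne_zero.2 (Nat.totient_pos.2 k_ne_zero.pos).ne'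
  have totient_system (t : ℕ) (ht_pos : t > 0) (ht : t ∣ n) :
      ∑ i ∈ t.divisors, (φ i : K) * ∑ d ∈ n.divisors with i ∣ d, a d = n / t := by
    rw [← sum_mul_gcd_eq_sum_totient_mul _ _ ht_pos.ne', ha t ht]
  have moebius_inversion := (sum_eq_iff_sum_mul_moebius_eq_on {t | t ∣ n}
    fun _ _ ↦ dvd_trans).1 totient_system k k_ne_zero.pos hk
  rw [sum_divisorsAntidiagonal_moebius_mul_div _ k_ne_zero] at moebius_inversion
  apply mul_left_cancel₀ totient_ne_zero
  rw [← moebius_inversion, signedRadicalDivSq.apply_of_ne_zero k_ne_zero]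
  field_simp
  linear_combination -totient_mul_prod_neg_primeFactors K k

theorem dimFormulaCoeff_system_unique_general {K : Type*} [Field K] [CharZero K] {n : ℕ}
    (hn : n ≠ 0) {a : ℕ → K}
    (ha : ∀ t, t ∣ n → ∑ d ∈ n.divisors, a d * (t.gcd d : K) = n / t) {d : ℕ} (hd : d ∣ n) :
    a d = (dimFormulaCoeff n d : K) :=
  calc a d
    _ = ∑ m ∈ (n / d).divisors, (μ m : K) * ∑ l ∈ n.divisors with d * m ∣ l, a l := by
      simpa only [zsmul_eq_mul] using (sum_moebius_smul_sum_multiples a hn hd).symm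
    _ = ∑ m ∈ (n / d).divisors, (μ m : K) * (n * signedRadicalDivSq K (d * m)) :=
      sum_congr rfl fun m hm ↦ by
        rw [sum_multiples_eq_of_sum_mul_gcd_eq hn ha
          (Nat.mul_dvd_of_dvd_div hd (Nat.dvd_of_mem_divisors hm))]
    _ = n * ∑ m ∈ (n / d).divisors, (μ m : K) * signedRadicalDivSq K (d * m) := by
      simp only [mul_sum, mul_left_comm]
    _ = (dimFormulaCoeff n d : K) := mul_sum_moebius_mul_signedRadicalDivSq K hn hd

/-- For a positive integer `n`, the linear system
`∑_{d∣n} a_d · gcd(t,d) = n/t` (one equation for each divisor `t` of `n`) has at most one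
rational solution `(a_d)_{d∣n}`; consequently any solution satisfies `a_d = c_n(d)` for every
divisor `d` of `n`. -/
theorem dimFormulaCoeff_system_unique (n : ℕ) (hn : 0 < n) :
    (∀ a b : ℕ → ℚ,
      (∀ t : ℕ, t ∣ n → ∑ d ∈ n.divisors, a d * (Nat.gcd t d : ℚ) = (n : ℚ) / (t : ℚ)) →
      (∀ t : ℕ, t ∣ n → ∑ d ∈ n.divisors, b d * (Nat.gcd t d : ℚ) = (n : ℚ) / (t : ℚ)) →
      ∀ d : ℕ, d ∣ n → a d = b d) ∧
    (∀ a : ℕ → ℚ,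
      (∀ t : ℕ, t ∣ n → ∑ d ∈ n.divisors, a d * (Nat.gcd t d : ℚ) = (n : ℚ) / (t : ℚ)) →
      ∀ d : ℕ, d ∣ n → a d = dimFormulaCoeff n d) := by
  refine ⟨fun a b ha hb d hd ↦ ?_, fun a ha d hd ↦ ?_⟩
  · exact (dimFormulaCoeff_system_unique_general hn.ne' ha hd).trans
      (dimFormulaCoeff_system_unique_general hn.ne' hb hd).symm
  · exact dimFormulaCoeff_system_unique_general hn.ne' ha hd
end

section
/- Let L be a positive-definite integral lattice, i.e. a free ℤ-module of finite rank with a symmetric, positive-definite bilinear form ⟨·,·⟩ : L × L → ℤ, and let ν be an isometry of L of finite order m. Extend ν ℚ-linearly to V := L ⊗_ℤ ℚ and let π_ν := (1/m)∑_{i=0}^{m−1} νⁱ be the projection of V onto the ν-fixed subspace. Then π_ν(L') = (L^ν)', i.e. the image under π_ν of the dual lattice L' = {x ∈ V | ⟨x,α⟩ ∈ ℤ for all α ∈ L} equals the set {x ∈ V | νx = x and ⟨x,α⟩ ∈ ℤ for all α ∈ L^ν}, where L^ν := {α ∈ L | να = α} is the fixed-point sublattice. -/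
open Finset

/-!
Averaging over the powers of an isometry of finite order is a self-adjoint projection onto the
fixed subspace. Let `P` be any self-adjoint projection onto a subspace `W`. Since
`⟨P y, α⟩ = ⟨y, α⟩` for `α ∈ W`, the map `P` sends `L'` into `(L ∩ W)'`. Conversely, `L / (L ∩ W)`
embeds into `V / W`, so it is free and `L ∩ W` is a direct summand of `L`; hence there is a
projection `ρ` of `V` onto `W`, in general not self-adjoint, with `ρ(L) ⊆ L`. For
`x ∈ W ∩ (L ∩ W)'` the functional `⟨x, ρ ·⟩` is integral on `L`, and the vector `y ∈ L'`
representing it satisfies `P y = x`.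
-/

open LinearMap (BilinForm IsProj)

section PrincipalIdealDomain

variable {R M N : Type*} [CommRing R] [IsDomain R] [IsPrincipalIdealRing R]
  [AddCommGroup M] [Module R M] [Module.Finite R M]
  [AddCommGroup N] [Module R N] [Module.IsTorsionFree R N]

lemma exists_isProj_ker (f : M →ₗ[R] N) : ∃ r : M →ₗ[R] M, IsProj (LinearMap.ker f) r := by
  obtain ⟨s, hs⟩ := f.rangeRestrict.exists_rightInverse_of_surjective f.range_rangeRestrict
  have hfs (x : M) : f (s (f.rangeRestrict x)) = f x :=
    congrArg Subtype.val (LinearMap.congr_fun hs (f.rangeRestrict x))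
  refine ⟨LinearMap.id - s ∘ₗ f.rangeRestrict, fun x ↦ ?_, fun x hx ↦ ?_⟩
  · simp [hfs]
  · have hx' : f.rangeRestrict x = 0 := Subtype.ext hx
    simp [hx']

end PrincipalIdealDomain

section Lattice

variable {R K V : Type*} [CommRing R] [IsDomain R] [Field K] [Algebra R K]
  [IsFractionRing R K] [AddCommGroup V] [Module R V] [Module K V] [IsScalarTower R K V]
  {L : Submodule R V}

lemma exists_smul_mem_of_span_eq_top (hL : Submodule.span K (L : Set V) = ⊤) (x : V) :
    ∃ a : R, a ≠ 0 ∧ a • x ∈ L := by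
  have hx : x ∈ Submodule.span K (L : Set V) := hL ▸ Submodule.mem_top
  obtain ⟨a, ha⟩ := multiple_mem_span_of_mem_localization_span (nonZeroDivisors R) K _ x hx
  exact ⟨a, nonZeroDivisors.coe_ne_zero a, by simpa [Submonoid.smul_def] using ha⟩

lemma nondegenerate_of_span_eq_top_of_anisotropic {B : BilinForm K V}
    (hL : Submodule.span K (L : Set V) = ⊤) (hB : ∀ x ∈ L, B x x = 0 → x = 0) :
    B.Nondegenerate := by
  have eq_zero_of_self (x : V) (hx : B x x = 0) : x = 0 := by
    have := Module.IsTorsionFree.trans_faithfulSMul R K V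
    obtain ⟨a, ha, hax⟩ := exists_smul_mem_of_span_eq_top hL x
    exact (smul_eq_zero_iff_right ha).mp (hB _ hax (by simp [hx]))
  exact ⟨fun x hx ↦ eq_zero_of_self x (hx x), fun x hx ↦ eq_zero_of_self x (hx x)⟩

variable [IsPrincipalIdealRing R] (L) [Submodule.IsLattice K L]

lemma exists_linearMap_extending_lattice {V' : Type*} [AddCommGroup V'] [Module R V']
    [Module K V'] [IsScalarTower R K V'] (f : L →ₗ[R] V') :
    ∃ F : V →ₗ[K] V', ∀ x : L, F x = f x := by
  let b := Module.Free.chooseBasis R L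
  let F := (b.extendOfIsLattice K).constr K (f ∘ b)
  have hF : F.restrictScalars R ∘ₗ L.subtype = f := b.ext fun i ↦ by
    have h := (b.extendOfIsLattice K).constr_basis K (f ∘ b) i
    rwa [Module.Basis.extendOfIsLattice_apply] at h
  exact ⟨F, LinearMap.congr_fun hF⟩

lemma exists_isProj_mapsTo_lattice (W : Submodule K V) :
    ∃ ρ : V →ₗ[K] V, IsProj W ρ ∧ Set.MapsTo ρ L L := by
  have := Module.IsTorsionFree.trans_faithfulSMul R K V
  have := Module.IsTorsionFree.trans_faithfulSMul R K (V ⧸ W)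
  have hL : Submodule.span K (L : Set V) = ⊤ := Submodule.IsLattice.span_eq_top
  obtain ⟨r, hr⟩ := exists_isProj_ker (W.mkQ.restrictScalars R ∘ₗ L.subtype)
  have mem_ker (x : L) :
      x ∈ LinearMap.ker (W.mkQ.restrictScalars R ∘ₗ L.subtype) ↔ (x : V) ∈ W := by simp
  obtain ⟨ρ, hρ⟩ := exists_linearMap_extending_lattice L (L.subtype ∘ₗ r)
  refine ⟨ρ, ⟨fun x ↦ ?_, fun x hx ↦ ?_⟩, fun x hx ↦ ?_⟩
  · have hLW : (L : Set V) ⊆ W.comap ρ := fun x hx ↦ by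
      simpa [hρ ⟨x, hx⟩] using (mem_ker _).mp (hr.map_mem ⟨x, hx⟩)
    have hVW := Submodule.span_le.mpr hLW
    rw [hL] at hVW
    exact hVW trivial
  · obtain ⟨a, ha, hax⟩ := exists_smul_mem_of_span_eq_top hL x
    have hρax : ρ (a • x) = a • x := by
      rw [hρ ⟨_, hax⟩, LinearMap.comp_apply,
        hr.map_id _ ((mem_ker _).mpr (W.smul_of_tower_mem a hx)), Submodule.subtype_apply]
    rw [LinearMap.map_smul_of_tower] at hρax
    exact smul_right_injective V ha hρax
  · rw [hρ ⟨x, hx⟩]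
    exact (r ⟨x, hx⟩).2

theorem map_dualSubmodule_of_isProj {B : BilinForm K V} (hB : B.Nondegenerate)
    {W : Submodule K V} {P : V →ₗ[K] V} (hP : IsProj W P) (hPB : B.IsSelfAdjoint P) :
    (B.dualSubmodule L).map (P.restrictScalars R) =
      W.restrictScalars R ⊓ B.dualSubmodule (L ⊓ W.restrictScalars R) := by
  have apply_P_left (y w : V) (hw : w ∈ W) : B (P y) w = B y w := by
    rw [hPB y w, hP.map_id w hw]
  ext x
  refine ⟨?_, fun ⟨hxW, hx⟩ ↦ ?_⟩
  · rintro ⟨y, hy, rfl⟩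
    refine ⟨hP.map_mem y, fun α ⟨hαL, hαW⟩ ↦ ?_⟩
    simpa [apply_P_left y α hαW] using hy α hαL
  · have : Module.Finite K V :=
      .of_basis ((Module.Free.chooseBasis R L).extendOfIsLattice K)
    obtain ⟨ρ, hρ, hρL⟩ := exists_isProj_mapsTo_lattice L W
    let y := (B.toDual hB).symm (B x ∘ₗ ρ)
    have hy (v : V) : B y v = B x (ρ v) :=
      BilinForm.apply_toDual_symm_apply (hB := hB) (B x ∘ₗ ρ) v
    refine ⟨y, fun α hα ↦ ?_, ?_⟩
    · rw [hy]
      exact hx _ ⟨hρL hα, hρ.map_mem α⟩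
    · refine (B.toDual hB).injective (LinearMap.ext fun v ↦ ?_)
      calc B (P y) v = B (P y) (P v) := by
            rw [hPB y v, hPB y (P v), hP.map_id _ (hP.map_mem v)]
        _ = B x (P v) := by
            rw [apply_P_left _ _ (hP.map_mem v), hy, hρ.map_id _ (hP.map_mem v)]
        _ = B x v := by rw [← hPB x v, hP.map_id x hxW]

end Lattice

section DualSubmodule

variable {R K V : Type*} [CommRing R] [Field K] [Algebra R K]
  [AddCommGroup V] [Module R V] [Module K V] [IsScalarTower R K V]

lemma mem_dualSubmodule_iff_exists {B : BilinForm K V} {L : Submodule R V} {x : V} :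
    x ∈ B.dualSubmodule L ↔ ∀ α ∈ L, ∃ k : R, B x α = algebraMap R K k := by
  simp only [BilinForm.mem_dualSubmodule, Submodule.mem_one, eq_comm]

end DualSubmodule

section CyclicAverage

variable {K V : Type*} [Field K] [AddCommGroup V] [Module K V]

/-- The average `π_ν = (1/m) ∑_{i<m} νⁱ`, which projects onto the `ν`-fixed vectors when `ν ^ m = 1`
and `m` is invertible in `K`. It is `0` when `m` vanishes in `K`. -/
def cyclicAverage (ν : Module.End K V) (m : ℕ) : Module.End K V :=
  (m : K)⁻¹ • ∑ i ∈ range m, ν ^ i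

lemma cyclicAverage_apply (ν : Module.End K V) (m : ℕ) (x : V) :
    cyclicAverage ν m x = (m : K)⁻¹ • ∑ i ∈ range m, (ν ^ i) x := by
  simp [cyclicAverage]

variable {ν : Module.End K V} {m : ℕ}

lemma isProj_cyclicAverage (hm : (m : K) ≠ 0) (hν : ν ^ m = 1) :
    IsProj (LinearMap.eqLocus ν LinearMap.id) (cyclicAverage ν m) where
  map_mem x := by
    have h : (ν - 1) * cyclicAverage ν m = 0 := by
      rw [cyclicAverage, mul_smul_comm, mul_geom_sum, hν, sub_self, smul_zero]
    simpa [sub_eq_zero] using LinearMap.congr_fun h x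
  map_id x hx := by
    have hpow (i : ℕ) : (ν ^ i) x = x := by
      rw [Module.End.pow_apply]
      exact Function.IsFixedPt.iterate hx i
    simp [cyclicAverage_apply, hpow, ← Nat.cast_smul_eq_nsmul K, smul_smul, hm]

lemma isSelfAdjoint_cyclicAverage {B : BilinForm K V}
    (hνB : ∀ x y, B (ν x) (ν y) = B x y) (hν : ν ^ m = 1) :
    B.IsSelfAdjoint (cyclicAverage ν m) := by
  have pow_isometry (k : ℕ) (x y : V) : B ((ν ^ k) x) ((ν ^ k) y) = B x y := by
    induction k with
    | zero => simp
    | succ k ih => rw [pow_succ', Module.End.mul_apply, Module.End.mul_apply, hνB, ih]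
  have pow_adjoint (x y : V) : ∀ i ∈ range m, B ((ν ^ i) x) y = B x ((ν ^ (m - 1 - i + 1)) y) := by
    intro i hi
    have hi' : i + (m - 1 - i + 1) = m := by grind
    rw [← pow_isometry i x, ← Module.End.mul_apply, ← pow_add, hi', hν, Module.End.one_apply]
  have sum_shift (y : V) : ∑ i ∈ range m, (ν ^ (i + 1)) y = ∑ i ∈ range m, (ν ^ i) y := by
    have h := sum_range_succ' (fun i ↦ (ν ^ i) y) m
    rw [sum_range_succ, hν, pow_zero] at h
    exact (add_right_cancel h).symm
  intro x y
  have sum_adjoint : B (∑ i ∈ range m, (ν ^ i) x) y = B x (∑ i ∈ range m, (ν ^ i) y) :=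
    calc B (∑ i ∈ range m, (ν ^ i) x) y
      _ = ∑ i ∈ range m, B x ((ν ^ (m - 1 - i + 1)) y) := by
        rw [map_sum, LinearMap.sum_apply, sum_congr rfl (pow_adjoint x y)]
      _ = B x (∑ i ∈ range m, (ν ^ (i + 1)) y) := by
        rw [sum_range_reflect (fun j ↦ B x ((ν ^ (j + 1)) y)), map_sum]
      _ = B x (∑ i ∈ range m, (ν ^ i) y) := by rw [sum_shift]
  simp only [cyclicAverage_apply, map_smul, LinearMap.smul_apply, sum_adjoint]

end CyclicAverage

theorem image_dual_lattice_eq_dual_fixed_lattice_general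
    {R K V : Type*} [CommRing R] [IsDomain R] [IsPrincipalIdealRing R] [Field K] [Algebra R K]
    [IsFractionRing R K] [AddCommGroup V] [Module R V] [Module K V] [IsScalarTower R K V]
    (B : BilinForm K V) (hB : B.Nondegenerate)
    (L : Submodule R V) [Submodule.IsLattice K L]
    (ν : V ≃ₗ[K] V) (hνB : ∀ x y, B (ν x) (ν y) = B x y)
    (m : ℕ) (hm : (m : K) ≠ 0) (hνm : ν ^ m = 1) :
    (fun x : V ↦ (m : K)⁻¹ • ∑ i ∈ range m, (ν ^ i) x) ''
        {x : V | ∀ α ∈ L, ∃ k : R, B x α = algebraMap R K k} =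
      {x : V | ν x = x ∧ ∀ α ∈ L, ν α = α → ∃ k : R, B x α = algebraMap R K k} := by
  have coe_pow (i : ℕ) (x : V) : ((ν : Module.End K V) ^ i) x = (ν ^ i) x := by
    rw [Module.End.pow_apply, LinearEquiv.pow_apply, LinearEquiv.coe_coe]
  have hν : (ν : Module.End K V) ^ m = 1 := LinearMap.ext fun x ↦ by simp [coe_pow, hνm]
  have h := map_dualSubmodule_of_isProj L hB (isProj_cyclicAverage hm hν)
    (isSelfAdjoint_cyclicAverage hνB hν)
  ext x
  simpa [mem_dualSubmodule_iff_exists, cyclicAverage_apply, coe_pow] using SetLike.ext_iff.mp h x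

/-- Let `L` be a positive-definite integral lattice (realised as a finitely
generated `ℤ`-submodule of a finite-dimensional `ℚ`-vector space `V = L ⊗ ℚ` which spans `V`,
equipped with a symmetric bilinear form `B` that is `ℤ`-valued and positive definite on `L`),
and let `ν` be an isometry of `L` with `ν ^ m = 1`, `m > 0`.  Then the image of the dual
lattice `L'` under the projection `π_ν = (1/m) ∑_{i<m} νⁱ` onto the `ν`-fixed subspace equals
the dual lattice `(L^ν)'` of the fixed-point sublattice `L^ν`, taken inside the `ν`-fixed
subspace of `V`. -/
theorem image_dual_lattice_eq_dual_fixed_lattice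
    {V : Type*} [AddCommGroup V] [Module ℚ V] [FiniteDimensional ℚ V]
    (B : V →ₗ[ℚ] V →ₗ[ℚ] ℚ)
    (hsymm : ∀ x y : V, B x y = B y x)
    (L : Submodule ℤ V) (hfg : L.FG)
    (hspan : Submodule.span ℚ (L : Set V) = ⊤)
    (hint : ∀ x ∈ L, ∀ y ∈ L, ∃ k : ℤ, B x y = (k : ℚ))
    (hpos : ∀ x ∈ L, x ≠ 0 → 0 < B x x)
    (ν : V ≃ₗ[ℚ] V)
    (hνL : ∀ x : V, x ∈ L ↔ ν x ∈ L)
    (hνB : ∀ x ∈ L, ∀ y ∈ L, B (ν x) (ν y) = B x y)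
    (m : ℕ) (hm : 0 < m) (hνm : ν ^ m = 1) :
    (fun x : V => (m : ℚ)⁻¹ • ∑ i ∈ Finset.range m, (ν ^ i) x) ''
        {x : V | ∀ α ∈ L, ∃ k : ℤ, B x α = (k : ℚ)} =
      {x : V | ν x = x ∧ ∀ α ∈ L, ν α = α → ∃ k : ℤ, B x α = (k : ℚ)} := by
  have : Submodule.IsLattice ℚ L := ⟨hfg, hspan⟩
  have hB : B.Nondegenerate := nondegenerate_of_span_eq_top_of_anisotropic hspan fun x hx hxx ↦
    by_contra fun hx0 ↦ (hpos x hx hx0).ne' hxx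
  have hνB' : B.compl₁₂ ν.toLinearMap ν.toLinearMap = B :=
    LinearMap.ext_on hspan fun x hx ↦ LinearMap.ext_on hspan fun y hy ↦ hνB x hx y hy
  exact image_dual_lattice_eq_dual_fixed_lattice_general B hB L ν
    (fun x y ↦ LinearMap.congr_fun₂ hνB' x y) m (Nat.cast_ne_zero.mpr hm.ne') hνm
end
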